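/- arXiv:1304.0174 — 2 statements merged into one kernel-verified Lean document; each statement's English description precedes it below -/
import Mathlib

section
/- Let α : F → F be a Plücker transformation of the flag space of a 3-dimensional projective space. Then either there exists a unique order automorphism κ of the lattice of K-subspaces of V such that α(P, g, ε) = (κ P, κ g, κ ε) for every flag (P, g, ε), or there exists a unique order-reversing bijection δ of the lattice of K-subspaces of V such that α(P, g, ε) = (δ ε, δ g, δ P) for every flag (P, g, ε). -/
/-!
Only the lattice of subspaces matters: it is a complemented modular lattice of length four, a flag
is a maximal chain `⊥ ⋖ P ⋖ g ⋖ ε ⋖ ⊤`, and a duality is a collineation onto the order dual.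

Distinct related flags differ in exactly one component. Changing the point of a flag commutes with
changing its plane, which produces a quadrangle without diagonals; no such quadrangle contains an
edge along which the line changes, because two distinct points lie on only one line. So a Plücker
transformation preserves changes of line, and at each flag it either preserves or interchanges
changes of point and changes of plane. Both behaviours cannot occur at neighbouring flags. For two
flags with the same point `P` and the same plane `ε` this is seen by moving their points to `X` and
`Y` in `ε` and closing up a hexagon along the line `X ⊔ Y`: with mixed behaviour, the images of the
two flags on this line would differ in both point and plane.

After dualizing the target if necessary, all three kinds of change are preserved. Flags with a
common point are joined by changes of line and plane, and similarly for common lines and planes.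
Hence the transformation acts on points, lines and planes separately, and it preserves incidence
because any two incident subspaces belong to a common flag.
-/

/-- A flag of a 3-dimensional projective space: a triple `(P, g, ε)` of subspaces of the
underlying 4-dimensional vector space `V` with `finrank P = 1`, `finrank g = 2`,
`finrank ε = 3` and `P ≤ g ≤ ε`. -/
structure ProjFlag (K : Type*) (V : Type*) [DivisionRing K] [AddCommGroup V]
    [Module K V] where
  pt : Submodule K V
  ln : Submodule K V
  pl : Submodule K V
  finrank_pt : Module.finrank K pt = 1
  finrank_ln : Module.finrank K ln = 2
  finrank_pl : Module.finrank K pl = 3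
  pt_le_ln : pt ≤ ln
  ln_le_pl : ln ≤ pl

/-- Two flags are related if they agree in at least two of their three components. -/
def ProjFlag.Related {K V : Type*} [DivisionRing K] [AddCommGroup V] [Module K V]
    (Φ Ψ : ProjFlag K V) : Prop :=
  (Φ.pt = Ψ.pt ∧ Φ.ln = Ψ.ln) ∨ (Φ.pt = Ψ.pt ∧ Φ.pl = Ψ.pl) ∨ (Φ.ln = Ψ.ln ∧ Φ.pl = Ψ.pl)

section Order

theorem existsUnique_orderIso_of_biTotal {α β : Type*} [PartialOrder α] [PartialOrder β]
    {R : α → β → Prop} (hR : Relator.BiTotal R)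
    (hle : ∀ ⦃a b a' b'⦄, R a b → R a' b' → (a ≤ a' ↔ b ≤ b')) :
    ∃! e : α ≃o β, ∀ a b, R a b → e a = b := by
  choose f hf using hR.1
  choose g hg using hR.2
  have right_unique {a b b'} (h : R a b) (h' : R a b') : b = b' :=
    le_antisymm ((hle h h').1 le_rfl) ((hle h' h).1 le_rfl)
  have left_unique {a a' b} (h : R a b) (h' : R a' b) : a = a' :=
    le_antisymm ((hle h h').2 le_rfl) ((hle h' h).2 le_rfl)
  let e : α ≃o β :=
    { toFun := f
      invFun := g
      left_inv := fun a => left_unique (hg (f a)) (hf a)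
      right_inv := fun b => right_unique (hf (g b)) (hg b)
      map_rel_iff' := fun {a a'} => (hle (hf a) (hf a')).symm }
  exact ⟨e, fun a b h => right_unique (hf a) h,
    fun e' he' => OrderIso.ext (funext fun a => he' a (f a) (hf a))⟩

theorem existsUnique_orderIso_orderDual_iff {α β : Type*} [LE α] [LE β] {p : (α → β) → Prop} :
    (∃! δ : α ≃o βᵒᵈ, p (OrderDual.ofDual ∘ δ)) ↔
      ∃! δ : α ≃ β, (∀ a b, a ≤ b ↔ δ b ≤ δ a) ∧ p δ := by
  constructor
  · rintro ⟨δ, hδ, huniq⟩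
    refine ⟨δ.toEquiv.trans OrderDual.ofDual, ⟨fun _ _ => δ.map_rel_iff.symm, hδ⟩, ?_⟩
    rintro δ' ⟨hle, hδ'⟩
    rw [← huniq ⟨δ'.trans OrderDual.toDual, (hle _ _).symm⟩ hδ']
    rfl
  · rintro ⟨δ, ⟨hle, hδ⟩, huniq⟩
    refine ⟨⟨δ.trans OrderDual.toDual, (hle _ _).symm⟩, hδ, fun δ' hδ' => ?_⟩
    ext a
    exact congrArg (· a) (huniq (δ'.toEquiv.trans OrderDual.ofDual)
      ⟨fun _ _ => δ'.map_rel_iff.symm, hδ'⟩)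

theorem height_eq_height_add_one_of_covBy {α : Type*} [Lattice α] [IsLowerModularLattice α]
    [WellFoundedLT α] {a b : α} (h : a ⋖ b) : Order.height b = Order.height a + 1 := by
  induction b using WellFoundedLT.induction generalizing a with
  | ind b ih =>
    refine le_antisymm ?_ (Order.height_add_one_le h.lt)
    rw [Order.height_eq_iSup_lt_height]
    refine iSup₂_le fun c hcb => add_le_add_left ?_ 1
    by_cases hca : c ≤ a
    · exact Order.height_mono hca
    · have hac : ¬ a ≤ c := fun hac => h.2 (lt_of_le_not_ge hac hca) hcb
      have hsup : a ⊔ c = b :=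
        (h.eq_or_eq le_sup_left (sup_le h.le hcb.le)).resolve_left (by simpa using hca)
      have hcov : a ⊓ c ⋖ c := inf_covBy_of_covBy_sup_left (hsup.symm ▸ h)
      rw [ih c hcb hcov]
      exact Order.height_add_one_le (inf_lt_left.2 hac)

theorem height_relSeries_covBy_apply {α : Type*} [Lattice α] [OrderBot α]
    [IsLowerModularLattice α] [WellFoundedLT α] (t : RelSeries {(a, b) : α × α | a ⋖ b})
    (ht : t.head = ⊥) (i : Fin (t.length + 1)) : Order.height (t i) = i := by
  induction i using Fin.induction with
  | zero => exact (congrArg Order.height ht).trans (by simp)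
  | succ i ih =>
    rw [height_eq_height_add_one_of_covBy (t.step i), ih]
    rfl

theorem exists_ne_covBy_covBy {α : Type*} [Lattice α] [BoundedOrder α] [IsModularLattice α]
    [ComplementedLattice α] {a b c : α} (hab : a ⋖ b) (hbc : b ⋖ c) :
    ∃ b', b ≠ b' ∧ a ⋖ b' ∧ b' ⋖ c := by
  obtain ⟨b', hinf, hsup⟩ := IsModularLattice.exists_inf_eq_and_sup_eq hab.le hbc.le
  refine ⟨b', ?_, ?_, ?_⟩
  · rintro rfl
    exact hab.ne (hinf.symm.trans (inf_idem b))
  · exact hinf ▸ inf_covBy_of_covBy_sup_left (hsup.symm ▸ hbc)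
  · exact hsup ▸ covBy_sup_of_inf_covBy_left (hinf.symm ▸ hab)

end Order

/-- The lattice of subspaces of a three-dimensional projective space. A line is only required to
have two points, so that reducible spaces are included. -/
class IsProjectiveThreeSpace (L : Type*) [Lattice L] [BoundedOrder L] : Prop extends
    IsModularLattice L, ComplementedLattice L where
  krullDim_eq_four : Order.krullDim L = 4

namespace IsProjectiveThreeSpace

variable {L : Type*} [Lattice L] [BoundedOrder L] [IsProjectiveThreeSpace L]

instance orderDual : IsProjectiveThreeSpace Lᵒᵈ where
  krullDim_eq_four := by rw [Order.krullDim_orderDual, krullDim_eq_four]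

instance wellFoundedLT : WellFoundedLT L := by
  have : FiniteDimensionalOrder L := by
    rw [Order.finiteDimensionalOrder_iff_krullDim_ne_bot_and_top, krullDim_eq_four]
    decide
  exact ⟨SetRel.IsWellFounded.of_finiteDimensional {(x, y) : L × L | x < y}⟩

instance wellFoundedGT : WellFoundedGT L :=
  inferInstanceAs (WellFoundedLT Lᵒᵈ)

end IsProjectiveThreeSpace

/-- A flag of the projective space with subspace lattice `L`, as a maximal chain of length four:
the counterpart of `ProjFlag` without reference to vector space dimensions. -/
@[ext]
structure LatticeFlag (L : Type*) [PartialOrder L] [BoundedOrder L] where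
  pt : L
  ln : L
  pl : L
  bot_covBy_pt : ⊥ ⋖ pt
  pt_covBy_ln : pt ⋖ ln
  ln_covBy_pl : ln ⋖ pl
  pl_covBy_top : pl ⋖ ⊤

namespace LatticeFlag

section PartialOrder

variable {L M : Type*} [PartialOrder L] [BoundedOrder L] [PartialOrder M] [BoundedOrder M]
  {Φ Ψ X : LatticeFlag L}

/-- The members of the maximal chain of a flag, indexed by their height in the lattice. -/
def elem (Φ : LatticeFlag L) : Fin 5 → L := ![⊥, Φ.pt, Φ.ln, Φ.pl, ⊤]

theorem elem_injective : Function.Injective (elem : LatticeFlag L → Fin 5 → L) := fun _ _ h =>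
  LatticeFlag.ext (congrFun h 1) (congrFun h 2) (congrFun h 3)

theorem elem_castSucc_covBy_elem_succ (Φ : LatticeFlag L) (i : Fin 4) :
    Φ.elem i.castSucc ⋖ Φ.elem i.succ := by
  fin_cases i
  exacts [Φ.bot_covBy_pt, Φ.pt_covBy_ln, Φ.ln_covBy_pl, Φ.pl_covBy_top]

theorem elem_strictMono (Φ : LatticeFlag L) : StrictMono Φ.elem :=
  Fin.strictMono_iff_lt_succ.2 fun i => (Φ.elem_castSucc_covBy_elem_succ i).lt

/-- The image of a flag under a collineation. -/
def map (e : L ≃o M) (Φ : LatticeFlag L) : LatticeFlag M where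
  pt := e Φ.pt
  ln := e Φ.ln
  pl := e Φ.pl
  bot_covBy_pt := e.map_bot ▸ (apply_covBy_apply_iff e).2 Φ.bot_covBy_pt
  pt_covBy_ln := (apply_covBy_apply_iff e).2 Φ.pt_covBy_ln
  ln_covBy_pl := (apply_covBy_apply_iff e).2 Φ.ln_covBy_pl
  pl_covBy_top := e.map_top ▸ (apply_covBy_apply_iff e).2 Φ.pl_covBy_top

theorem elem_map (e : L ≃o M) (Φ : LatticeFlag L) (i : Fin 5) :
    (Φ.map e).elem i = e (Φ.elem i) := by
  fin_cases i
  exacts [e.map_bot.symm, rfl, rfl, rfl, e.map_top.symm]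

/-- The same flag in the dual space, where points and planes have exchanged roles. -/
def dual (Φ : LatticeFlag L) : LatticeFlag Lᵒᵈ where
  pt := OrderDual.toDual Φ.pl
  ln := OrderDual.toDual Φ.ln
  pl := OrderDual.toDual Φ.pt
  bot_covBy_pt := Φ.pl_covBy_top.toDual
  pt_covBy_ln := Φ.ln_covBy_pl.toDual
  ln_covBy_pl := Φ.pt_covBy_ln.toDual
  pl_covBy_top := Φ.bot_covBy_pt.toDual

/-- Two flags differ at most in their points. -/
def PtAdj (Φ Ψ : LatticeFlag L) : Prop := Φ.ln = Ψ.ln ∧ Φ.pl = Ψ.pl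

/-- Two flags differ at most in their lines. -/
def LnAdj (Φ Ψ : LatticeFlag L) : Prop := Φ.pt = Ψ.pt ∧ Φ.pl = Ψ.pl

/-- Two flags differ at most in their planes. The order of the two equations makes
`PlAdj Φ Ψ` definitionally equal to `PtAdj Φ.dual Ψ.dual`. -/
def PlAdj (Φ Ψ : LatticeFlag L) : Prop := Φ.ln = Ψ.ln ∧ Φ.pt = Ψ.pt

/-- Two flags agree in at least two of their three components; see `ProjFlag.Related`. -/
def Related (Φ Ψ : LatticeFlag L) : Prop := PtAdj Φ Ψ ∨ LnAdj Φ Ψ ∨ PlAdj Φ Ψ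

theorem PtAdj.symm (h : PtAdj Φ Ψ) : PtAdj Ψ Φ := ⟨h.1.symm, h.2.symm⟩

theorem LnAdj.symm (h : LnAdj Φ Ψ) : LnAdj Ψ Φ := ⟨h.1.symm, h.2.symm⟩

theorem PlAdj.symm (h : PlAdj Φ Ψ) : PlAdj Ψ Φ := ⟨h.1.symm, h.2.symm⟩

theorem PtAdj.trans (h : PtAdj Φ Ψ) (h' : PtAdj Ψ X) : PtAdj Φ X :=
  ⟨h.1.trans h'.1, h.2.trans h'.2⟩

theorem LnAdj.trans (h : LnAdj Φ Ψ) (h' : LnAdj Ψ X) : LnAdj Φ X :=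
  ⟨h.1.trans h'.1, h.2.trans h'.2⟩

theorem PlAdj.trans (h : PlAdj Φ Ψ) (h' : PlAdj Ψ X) : PlAdj Φ X :=
  ⟨h.1.trans h'.1, h.2.trans h'.2⟩

theorem LnAdj.dual (h : LnAdj Φ Ψ) : LnAdj Φ.dual Ψ.dual := ⟨h.2, h.1⟩

theorem related_dual : Related Φ.dual Ψ.dual ↔ Related Φ Ψ := by
  simp only [Related, PtAdj, LnAdj, PlAdj, LatticeFlag.dual, OrderDual.toDual_inj]
  tauto

theorem PtAdj.pt_ne (h : PtAdj Φ Ψ) (hne : Φ ≠ Ψ) : Φ.pt ≠ Ψ.pt :=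
  fun hpt => hne (LatticeFlag.ext hpt h.1 h.2)

theorem PlAdj.pl_ne (h : PlAdj Φ Ψ) (hne : Φ ≠ Ψ) : Φ.pl ≠ Ψ.pl :=
  fun hpl => hne (LatticeFlag.ext h.2 h.1 hpl)

theorem not_related_of_ne (hpt : Φ.pt ≠ Ψ.pt) (hpl : Φ.pl ≠ Ψ.pl) : ¬ Related Φ Ψ := by
  rintro (h | h | h)
  exacts [hpl h.2, hpt h.1, hpt h.2]

theorem PtAdj.of_related_of_related (h : PtAdj Φ Ψ) (hne : Φ ≠ Ψ) (hΦ : Related Φ X)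
    (hΨ : Related Ψ X) : PtAdj Φ X := by
  simp only [Related, PtAdj, LnAdj, PlAdj, ne_eq, LatticeFlag.ext_iff] at *
  grind

/-- A Plücker transformation from the flags of one projective space to those of another. -/
abbrev PluckerTransformation (L M : Type*) [PartialOrder L] [BoundedOrder L] [PartialOrder M]
    [BoundedOrder M] :=
  (Related : LatticeFlag L → LatticeFlag L → Prop) ≃r
    (Related : LatticeFlag M → LatticeFlag M → Prop)

/-- Reading flags in the dual space, as a Plücker transformation. Composing with it turns
statements about dualities into statements about collineations. -/
def dualIso : PluckerTransformation L Lᵒᵈ where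
  toFun := LatticeFlag.dual
  invFun Φ :=
    { pt := OrderDual.ofDual Φ.pl
      ln := OrderDual.ofDual Φ.ln
      pl := OrderDual.ofDual Φ.pt
      bot_covBy_pt := Φ.pl_covBy_top.ofDual
      pt_covBy_ln := Φ.ln_covBy_pl.ofDual
      ln_covBy_pl := Φ.pt_covBy_ln.ofDual
      pl_covBy_top := Φ.bot_covBy_pt.ofDual }
  map_rel_iff' := related_dual

/-- The flags `Φ` and `Ψ` are consecutive on a quadrangle `Φ, X, Y, Ψ` of related flags in which
`X` and `Ψ` are not related. -/
def SpansSquare (Φ Ψ : LatticeFlag L) : Prop :=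
  ∃ X Y, Related Φ X ∧ ¬ Related X Ψ ∧ Y ≠ Φ ∧ Related X Y ∧ Related Y Ψ

theorem spansSquare_apply_iff (α : PluckerTransformation L M) :
    SpansSquare (α Φ) (α Ψ) ↔ SpansSquare Φ Ψ := by
  simp only [SpansSquare, α.surjective.exists, α.map_rel_iff, α.injective.ne_iff]

/-- The Plücker transformation `α` preserves changes of the point of the flag `Φ`. -/
def PreservesPtAdjAt (α : PluckerTransformation L M) (Φ : LatticeFlag L) : Prop :=
  ∀ ⦃Ψ⦄, PtAdj Φ Ψ → PtAdj (α Φ) (α Ψ)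

theorem preservesPtAdjAt_of_ne {α : PluckerTransformation L M} (hne : Φ ≠ Ψ) (h : PtAdj Φ Ψ)
    (hα : PtAdj (α Φ) (α Ψ)) : PreservesPtAdjAt α Φ := fun _ hX =>
  hα.of_related_of_related (α.injective.ne hne) (α.map_rel_iff.2 (.inl hX))
    (α.map_rel_iff.2 (.inl (h.symm.trans hX)))

theorem PreservesPtAdjAt.of_ptAdj {α : PluckerTransformation L M} (hα : PreservesPtAdjAt α Φ)
    (h : PtAdj Φ Ψ) : PreservesPtAdjAt α Ψ :=
  fun _ hX => (hα h).symm.trans (hα (h.trans hX))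

theorem apply_eq_of_ln_eq {β : Type*} {f : LatticeFlag L → β}
    (hPt : ∀ {Φ Ψ}, PtAdj Φ Ψ → f Φ = f Ψ) (hPl : ∀ {Φ Ψ}, PlAdj Φ Ψ → f Φ = f Ψ)
    (h : Φ.ln = Ψ.ln) : f Φ = f Ψ := by
  let Θ : LatticeFlag L :=
    { Ψ with
      pl := Φ.pl
      ln_covBy_pl := h ▸ Φ.ln_covBy_pl
      pl_covBy_top := Φ.pl_covBy_top }
  exact (hPt (⟨h, rfl⟩ : PtAdj Φ Θ)).trans (hPl ⟨rfl, rfl⟩)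

end PartialOrder

section Lattice

variable {L : Type*} [Lattice L] [BoundedOrder L] {Φ Ψ X Y : LatticeFlag L}

theorem PtAdj.pt_sup_pt (h : PtAdj Φ Ψ) (hne : Φ ≠ Ψ) : Φ.pt ⊔ Ψ.pt = Φ.ln :=
  Φ.pt_covBy_ln.wcovBy.sup_eq (h.1 ▸ Ψ.pt_covBy_ln.wcovBy) (h.pt_ne hne)

theorem LnAdj.related_of_ptAdj (hΨ : LnAdj Φ Ψ) (hX : PtAdj Φ X) (hXY : Related X Y)
    (hYΨ : Related Y Ψ) (hne : Y ≠ Φ) : Related X Ψ := by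
  by_contra hXΨ
  obtain ⟨hXY', hYΨ'⟩ : LnAdj X Y ∧ PtAdj Y Ψ := by
    simp only [Related, PtAdj, LnAdj, PlAdj, ne_eq, LatticeFlag.ext_iff] at *
    grind
  have hln : Φ.ln = Ψ.ln := calc
    Φ.ln = Φ.pt ⊔ X.pt := (hX.pt_sup_pt fun h => hXΨ (h ▸ .inr (.inl hΨ))).symm
    _ = Ψ.pt ⊔ Y.pt := by rw [hΨ.1, hXY'.1]
    _ = Ψ.ln := hYΨ'.symm.pt_sup_pt fun h => hXΨ (h ▸ .inr (.inl hXY'))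
  exact hXΨ (.inl ⟨hX.1.symm.trans hln, hX.2.symm.trans hΨ.2⟩)

theorem LnAdj.not_spansSquare (h : LnAdj Φ Ψ) : ¬ SpansSquare Φ Ψ := by
  rintro ⟨X, Y, hX | hX | hX, hXΨ, hne, hXY, hYΨ⟩
  · exact hXΨ (h.related_of_ptAdj hX hXY hYΨ hne)
  · exact hXΨ (.inr (.inl (hX.symm.trans h)))
  · exact hXΨ (related_dual.1 (h.dual.related_of_ptAdj hX (related_dual.2 hXY)
      (related_dual.2 hYΨ) (dualIso.injective.ne hne)))

end Lattice

section ModularComplemented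

variable {L M : Type*} [Lattice L] [BoundedOrder L] [IsModularLattice L] [ComplementedLattice L]
  [Lattice M] [BoundedOrder M] [IsModularLattice M] [ComplementedLattice M]
  {Φ Ψ : LatticeFlag L} {α : PluckerTransformation L M}

theorem exists_ptAdj_ne (Φ : LatticeFlag L) : ∃ Ψ, PtAdj Φ Ψ ∧ Φ ≠ Ψ := by
  obtain ⟨p, hne, hbot, hln⟩ := exists_ne_covBy_covBy Φ.bot_covBy_pt Φ.pt_covBy_ln
  exact ⟨{ Φ with pt := p, bot_covBy_pt := hbot, pt_covBy_ln := hln }, ⟨rfl, rfl⟩,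
    fun h => hne (congrArg pt h)⟩

theorem exists_plAdj_ne (Φ : LatticeFlag L) : ∃ Ψ, PlAdj Φ Ψ ∧ Φ ≠ Ψ := by
  obtain ⟨e, hne, hln, htop⟩ := exists_ne_covBy_covBy Φ.ln_covBy_pl Φ.pl_covBy_top
  exact ⟨{ Φ with pl := e, ln_covBy_pl := hln, pl_covBy_top := htop }, ⟨rfl, rfl⟩,
    fun h => hne (congrArg pl h)⟩

theorem PtAdj.spansSquare (h : PtAdj Φ Ψ) (hne : Φ ≠ Ψ) : SpansSquare Φ Ψ := by
  obtain ⟨X, hX, hXne⟩ := exists_plAdj_ne Φ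
  have hXΨ : X.ln = Ψ.ln := hX.1.symm.trans h.1
  let Y : LatticeFlag L :=
    { Ψ with
      pl := X.pl
      ln_covBy_pl := hXΨ ▸ X.ln_covBy_pl
      pl_covBy_top := X.pl_covBy_top }
  refine ⟨X, Y, .inr (.inr hX), ?_, ?_, .inl ⟨hXΨ, rfl⟩, .inr (.inr ⟨rfl, rfl⟩)⟩
  · exact not_related_of_ne (hX.2 ▸ h.pt_ne hne) (h.2 ▸ (hX.pl_ne hXne).symm)
  · exact fun hY => h.pt_ne hne (congrArg pt hY).symm

theorem PlAdj.spansSquare (h : PlAdj Φ Ψ) (hne : Φ ≠ Ψ) : SpansSquare Φ Ψ :=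
  (spansSquare_apply_iff dualIso).1
    (PtAdj.spansSquare (Φ := Φ.dual) (Ψ := Ψ.dual) h (dualIso.injective.ne hne))

theorem lnAdj_iff : LnAdj Φ Ψ ↔ Related Φ Ψ ∧ ¬ SpansSquare Φ Ψ := by
  refine ⟨fun h => ⟨.inr (.inl h), h.not_spansSquare⟩, ?_⟩
  rintro ⟨h | h | h, hsquare⟩
  · obtain rfl := by_contra (hsquare ∘ h.spansSquare)
    exact ⟨rfl, rfl⟩
  · exact h
  · obtain rfl := by_contra (hsquare ∘ h.spansSquare)
    exact ⟨rfl, rfl⟩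

theorem lnAdj_apply_iff (α : PluckerTransformation L M) : LnAdj (α Φ) (α Ψ) ↔ LnAdj Φ Ψ := by
  rw [lnAdj_iff, lnAdj_iff, spansSquare_apply_iff, α.map_rel_iff]

theorem preservesPtAdjAt_or_dual (α : PluckerTransformation L M) (Φ : LatticeFlag L) :
    PreservesPtAdjAt α Φ ∨ PreservesPtAdjAt (α.trans dualIso) Φ := by
  obtain ⟨X, hX, hne⟩ := exists_ptAdj_ne Φ
  obtain h | h | h := α.map_rel_iff.2 (.inl hX : Related Φ X)
  · exact .inl (preservesPtAdjAt_of_ne hne hX h)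
  · exact absurd ((lnAdj_apply_iff α).1 h).1 (hX.pt_ne hne)
  · exact .inr (preservesPtAdjAt_of_ne hne hX h)

theorem PreservesPtAdjAt.plAdj (hα : PreservesPtAdjAt α Φ) (h : PlAdj Φ Ψ) :
    PlAdj (α Φ) (α Ψ) := by
  by_cases hΦΨ : Φ = Ψ
  · exact hΦΨ ▸ ⟨rfl, rfl⟩
  obtain h' | h' | h' := α.map_rel_iff.2 (.inr (.inr h) : Related Φ Ψ)
  · obtain ⟨X, hX, hne⟩ := exists_ptAdj_ne Φ
    have hXΨ : Related X Ψ := α.map_rel_iff.1 (.inl ((hα hX).symm.trans h'))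
    exact absurd hXΨ (not_related_of_ne (h.2 ▸ (hX.pt_ne hne).symm) (hX.2 ▸ h.pl_ne hΦΨ))
  · exact absurd ((lnAdj_apply_iff α).1 h').2 (h.pl_ne hΦΨ)
  · exact h'

theorem PreservesPtAdjAt.of_plAdj (hα : PreservesPtAdjAt α Φ) (h : PlAdj Φ Ψ) :
    PreservesPtAdjAt α Ψ := by
  by_cases hΦΨ : Φ = Ψ
  · exact hΦΨ ▸ hα
  refine (preservesPtAdjAt_or_dual α Ψ).resolve_right fun hdual => ?_
  obtain ⟨X, hX, hne⟩ := exists_ptAdj_ne Ψ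
  have hαX : PlAdj (α Φ) (α X) := (hα.plAdj h).trans (hdual hX)
  have hΦX : Related Φ X := α.map_rel_iff.1 (.inr (.inr hαX))
  exact not_related_of_ne (h.2 ▸ hX.pt_ne hne) (hX.2 ▸ h.pl_ne hΦΨ) hΦX

end ModularComplemented

theorem PreservesPtAdjAt.symm {L M : Type*} [Lattice L] [BoundedOrder L] [IsModularLattice L]
    [ComplementedLattice L] [PartialOrder M] [BoundedOrder M] {Φ : LatticeFlag L}
    {α : PluckerTransformation L M} (hα : PreservesPtAdjAt α Φ) :
    PreservesPtAdjAt α.symm (α Φ) := by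
  obtain ⟨X, hX, hne⟩ := exists_ptAdj_ne Φ
  refine preservesPtAdjAt_of_ne (α.injective.ne hne) (hα hX) ?_
  simpa only [RelIso.symm_apply_apply] using hX

theorem pt_covBy_pt_sup_pt {L : Type*} [Lattice L] [BoundedOrder L] [IsUpperModularLattice L]
    {Φ Ψ : LatticeFlag L} (hne : Φ.pt ≠ Ψ.pt) : Φ.pt ⋖ Φ.pt ⊔ Ψ.pt := by
  refine covBy_sup_of_inf_covBy_right ?_
  rw [Φ.bot_covBy_pt.wcovBy.inf_eq Ψ.bot_covBy_pt.wcovBy hne]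
  exact Ψ.bot_covBy_pt

section ThreeSpace

variable {L M : Type*} [Lattice L] [BoundedOrder L] [IsProjectiveThreeSpace L]
  [Lattice M] [BoundedOrder M] [IsProjectiveThreeSpace M]
  {Φ Ψ X : LatticeFlag L} {i j : Fin 5} {α : PluckerTransformation L M}

theorem height_elem (Φ : LatticeFlag L) (i : Fin 5) : Order.height (Φ.elem i) = i :=
  height_relSeries_covBy_apply ⟨4, Φ.elem, Φ.elem_castSucc_covBy_elem_succ⟩ rfl i

theorem index_eq_of_elem_eq (h : Φ.elem i = Ψ.elem j) : i = j := by
  have hheight := congrArg Order.height h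
  rw [height_elem, height_elem] at hheight
  exact Fin.ext (ENat.natCast_inj.1 hheight)

theorem exists_elem_eq_of_le {x y : L} (h : x ≤ y) :
    ∃ (Φ : LatticeFlag L) (i j : Fin 5), Φ.elem i = x ∧ Φ.elem j = y := by
  obtain ⟨s, hx, hy⟩ : ∃ s : LTSeries L, s.head = x ∧ s.last = y := by
    obtain rfl | h := h.eq_or_lt
    · exact ⟨RelSeries.singleton _ x, rfl, rfl⟩
    · exact ⟨(RelSeries.singleton _ y).cons x h, rfl, RelSeries.last_cons ..⟩
  obtain ⟨t, k, hk, hbot, htop⟩ := s.exists_relSeries_covBy_and_head_eq_bot_and_last_eq_bot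
  have hlength : t.length = 4 := by
    have hheight := Order.height_top_eq_krullDim (α := L)
    rw [IsProjectiveThreeSpace.krullDim_eq_four, ← htop, RelSeries.last,
      height_relSeries_covBy_apply t hbot] at hheight
    exact ENat.natCast_inj.1 (WithBot.coe_injective hheight)
  obtain ⟨n, t, ht⟩ := t
  obtain rfl : n = 4 := hlength
  let Φ : LatticeFlag L := ⟨t 1, t 2, t 3, hbot ▸ ht 0, ht 1, ht 2, htop ▸ ht 3⟩
  have helem : Φ.elem = t := by
    ext i
    fin_cases i
    exacts [hbot.symm, rfl, rfl, rfl, htop.symm]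
  refine ⟨Φ, k 0, k (Fin.last _), ?_, ?_⟩
  · rw [helem, ← hx]
    exact congrFun hk 0
  · rw [helem, ← hy]
    exact congrFun hk (Fin.last _)

theorem exists_elem_eq (x : L) : ∃ (Φ : LatticeFlag L) (i : Fin 5), Φ.elem i = x :=
  let ⟨Φ, i, _, hi, _⟩ := exists_elem_eq_of_le (le_refl x)
  ⟨Φ, i, hi⟩

theorem exists_elem_eq_of_elem_le (h : Φ.elem i ≤ Ψ.elem j) :
    ∃ Θ : LatticeFlag L, Θ.elem i = Φ.elem i ∧ Θ.elem j = Ψ.elem j := by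
  obtain ⟨Θ, k, l, hk, hl⟩ := exists_elem_eq_of_le h
  obtain rfl := index_eq_of_elem_eq hk
  obtain rfl := index_eq_of_elem_eq hl
  exact ⟨Θ, hk, hl⟩

theorem exists_ln_eq_pt_sup_pt (hne : Φ.pt ≠ Ψ.pt) (hΦ : Φ.pt ≤ X.elem j)
    (hΨ : Ψ.pt ≤ X.elem j) :
    ∃ Θ : LatticeFlag L, Θ.ln = Φ.pt ⊔ Ψ.pt ∧ Θ.elem j = X.elem j := by
  obtain ⟨Θ, i, k, hi, hk⟩ := exists_elem_eq_of_le (sup_le hΦ hΨ)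
  obtain rfl := index_eq_of_elem_eq hk
  have hheight : Order.height (Θ.elem i) = Order.height (Θ.elem 2) := by
    rw [hi, height_eq_height_add_one_of_covBy (pt_covBy_pt_sup_pt hne), height_elem]
    exact congrArg (· + 1) (Φ.height_elem 1)
  rw [height_elem, height_elem] at hheight
  obtain rfl : i = 2 := Fin.ext (ENat.natCast_inj.1 hheight)
  exact ⟨Θ, hi, hk⟩

theorem exists_lnAdj_ptAdj_lnAdj_of_pl_eq (h : Φ.pl = Ψ.pl) :
    ∃ S T, LnAdj Φ S ∧ PtAdj S T ∧ LnAdj T Ψ := by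
  by_cases hpt : Φ.pt = Ψ.pt
  · exact ⟨Φ, Φ, ⟨rfl, rfl⟩, ⟨rfl, rfl⟩, hpt, h⟩
  have hΦ : Φ.pt ≤ Φ.pl := Φ.pt_covBy_ln.le.trans Φ.ln_covBy_pl.le
  have hΨ : Ψ.pt ≤ Φ.pl := h ▸ Ψ.pt_covBy_ln.le.trans Ψ.ln_covBy_pl.le
  obtain ⟨Θ, hln, hpl : Θ.pl = Φ.pl⟩ := exists_ln_eq_pt_sup_pt (X := Φ) (j := 3) hpt hΦ hΨ
  have hΦΘ : Φ.pt ⋖ Θ.ln := hln ▸ pt_covBy_pt_sup_pt hpt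
  have hΨΘ : Ψ.pt ⋖ Θ.ln := (hln.trans (sup_comm _ _)) ▸ pt_covBy_pt_sup_pt (Ne.symm hpt)
  exact ⟨{ Θ with pt := Φ.pt, bot_covBy_pt := Φ.bot_covBy_pt, pt_covBy_ln := hΦΘ },
    { Θ with pt := Ψ.pt, bot_covBy_pt := Ψ.bot_covBy_pt, pt_covBy_ln := hΨΘ },
    ⟨rfl, hpl.symm⟩, ⟨rfl, rfl⟩, rfl, hpl.trans h⟩

section Connectivity

variable {β : Type*} {f : LatticeFlag L → β}

theorem apply_eq_of_pl_eq (hPt : ∀ {Φ Ψ}, PtAdj Φ Ψ → f Φ = f Ψ)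
    (hLn : ∀ {Φ Ψ}, LnAdj Φ Ψ → f Φ = f Ψ) (h : Φ.pl = Ψ.pl) : f Φ = f Ψ := by
  obtain ⟨S, T, hΦS, hST, hTΨ⟩ := exists_lnAdj_ptAdj_lnAdj_of_pl_eq h
  exact (hLn hΦS).trans ((hPt hST).trans (hLn hTΨ))

theorem apply_eq_of_pt_eq (hLn : ∀ {Φ Ψ}, LnAdj Φ Ψ → f Φ = f Ψ)
    (hPl : ∀ {Φ Ψ}, PlAdj Φ Ψ → f Φ = f Ψ) (h : Φ.pt = Ψ.pt) : f Φ = f Ψ :=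
  apply_eq_of_pl_eq (f := fun Θ : LatticeFlag Lᵒᵈ => f (dualIso.symm Θ)) (fun h => hPl h)
    (fun h => hLn ⟨h.2, h.1⟩) (Φ := Φ.dual) (Ψ := Ψ.dual) (congrArg OrderDual.toDual h)

theorem apply_eq_of_adj (hPt : ∀ {Φ Ψ}, PtAdj Φ Ψ → f Φ = f Ψ)
    (hLn : ∀ {Φ Ψ}, LnAdj Φ Ψ → f Φ = f Ψ) (hPl : ∀ {Φ Ψ}, PlAdj Φ Ψ → f Φ = f Ψ)
    (Φ Ψ : LatticeFlag L) : f Φ = f Ψ := by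
  by_cases hpt : Φ.pt = Ψ.pt
  · exact apply_eq_of_pt_eq hLn hPl hpt
  obtain ⟨Θ, hΘ, -⟩ := exists_ln_eq_pt_sup_pt (X := Φ) (j := 4) hpt le_top le_top
  have hincident {X : LatticeFlag L} (hX : X.pt ≤ Θ.ln) : f X = f Θ := by
    obtain ⟨Y, hXY, hYΘ⟩ := exists_elem_eq_of_elem_le (Φ := X) (Ψ := Θ) (i := 1) (j := 2) hX
    exact (apply_eq_of_pt_eq hLn hPl hXY.symm).trans (apply_eq_of_ln_eq hPt hPl hYΘ)
  exact (hincident (hΘ ▸ le_sup_left)).trans (hincident (hΘ ▸ le_sup_right)).symm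

end Connectivity

theorem PreservesPtAdjAt.of_lnAdj (hα : PreservesPtAdjAt α Φ) (h : LnAdj Φ Ψ) :
    PreservesPtAdjAt α Ψ := by
  refine (preservesPtAdjAt_or_dual α Ψ).resolve_right fun hdual => ?_
  obtain ⟨X, hX, hXne⟩ := exists_ptAdj_ne Φ
  obtain ⟨Y, hY, hYne⟩ := exists_ptAdj_ne Ψ
  obtain ⟨S, T, hXS, hST, hTY⟩ :=
    exists_lnAdj_ptAdj_lnAdj_of_pl_eq (hX.2.symm.trans (h.2.trans hY.2))
  have hαX : PtAdj (α Φ) (α X) := hα hX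
  have hαY : PlAdj (α Ψ) (α Y) := hdual hY
  have hαΦΨ := (lnAdj_apply_iff α).2 h
  have hαXS := (lnAdj_apply_iff α).2 hXS
  have hαTY := (lnAdj_apply_iff α).2 hTY
  have hpt : (α S).pt ≠ (α T).pt := by
    rw [← hαXS.1, hαTY.1, ← hαY.2, ← hαΦΨ.1]
    exact (hαX.pt_ne (α.injective.ne hXne)).symm
  have hpl : (α S).pl ≠ (α T).pl := by
    rw [← hαXS.2, ← hαX.2, hαΦΨ.2, hαTY.2]
    exact hαY.pl_ne (α.injective.ne hYne)
  exact not_related_of_ne hpt hpl (α.map_rel_iff.2 (.inl hST))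

theorem preservesPtAdjAt_iff (α : PluckerTransformation L M) (Φ Ψ : LatticeFlag L) :
    PreservesPtAdjAt α Φ ↔ PreservesPtAdjAt α Ψ :=
  Eq.to_iff (apply_eq_of_adj (fun h => propext ⟨(·.of_ptAdj h), (·.of_ptAdj h.symm)⟩)
    (fun h => propext ⟨(·.of_lnAdj h), (·.of_lnAdj h.symm)⟩)
    (fun h => propext ⟨(·.of_plAdj h), (·.of_plAdj h.symm)⟩) Φ Ψ)

theorem forall_preservesPtAdjAt_or_dual (α : PluckerTransformation L M) :
    (∀ Φ, PreservesPtAdjAt α Φ) ∨ ∀ Φ, PreservesPtAdjAt (α.trans dualIso) Φ := by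
  by_cases h : ∃ Φ, PreservesPtAdjAt α Φ
  · obtain ⟨Φ, hΦ⟩ := h
    exact .inl fun Ψ => (preservesPtAdjAt_iff α Φ Ψ).1 hΦ
  · exact .inr fun Φ => (preservesPtAdjAt_or_dual α Φ).resolve_left fun hΦ => h ⟨Φ, hΦ⟩

theorem elem_apply_eq (hα : ∀ Φ, PreservesPtAdjAt α Φ) (h : Φ.elem i = Ψ.elem i) :
    (α Φ).elem i = (α Ψ).elem i := by
  have hPt {Φ Ψ} : PtAdj Φ Ψ → PtAdj (α Φ) (α Ψ) := (hα Φ ·)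
  have hLn {Φ Ψ} : LnAdj Φ Ψ → LnAdj (α Φ) (α Ψ) := (lnAdj_apply_iff α).2
  have hPl {Φ Ψ} : PlAdj Φ Ψ → PlAdj (α Φ) (α Ψ) := (hα Φ).plAdj
  fin_cases i
  · rfl
  · exact apply_eq_of_pt_eq (f := fun Φ => (α Φ).pt) (fun h => (hLn h).1) (fun h => (hPl h).2) h
  · exact apply_eq_of_ln_eq (f := fun Φ => (α Φ).ln) (fun h => (hPt h).1) (fun h => (hPl h).1) h
  · exact apply_eq_of_pl_eq (f := fun Φ => (α Φ).pl) (fun h => (hPt h).2) (fun h => (hLn h).2) h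
  · rfl

theorem elem_apply_le_elem_apply (hα : ∀ Φ, PreservesPtAdjAt α Φ) (h : Φ.elem i ≤ Ψ.elem j) :
    (α Φ).elem i ≤ (α Ψ).elem j := by
  obtain ⟨Θ, hΘΦ, hΘΨ⟩ := exists_elem_eq_of_elem_le h
  rw [← hΘΦ, ← hΘΨ, Θ.elem_strictMono.le_iff_le] at h
  rw [← elem_apply_eq hα hΘΦ, ← elem_apply_eq hα hΘΨ]
  exact (α Θ).elem_strictMono.monotone h

theorem elem_apply_le_elem_apply_iff (hα : ∀ Φ, PreservesPtAdjAt α Φ) :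
    (α Φ).elem i ≤ (α Ψ).elem j ↔ Φ.elem i ≤ Ψ.elem j := by
  refine ⟨fun h => ?_, elem_apply_le_elem_apply hα⟩
  have hsymm : ∀ Φ, PreservesPtAdjAt α.symm Φ := α.surjective.forall.2 fun Φ => (hα Φ).symm
  simpa only [RelIso.symm_apply_apply] using elem_apply_le_elem_apply hsymm h

theorem existsUnique_forall_apply_eq_map (hα : ∀ Φ, PreservesPtAdjAt α Φ) :
    ∃! κ : L ≃o M, ∀ Φ, α Φ = Φ.map κ := by
  let R (x : L) (y : M) : Prop := ∃ Φ i, Φ.elem i = x ∧ (α Φ).elem i = y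
  have hR : Relator.BiTotal R := by
    refine ⟨fun x => ?_, fun y => ?_⟩
    · obtain ⟨Φ, i, rfl⟩ := exists_elem_eq x
      exact ⟨_, Φ, i, rfl, rfl⟩
    · obtain ⟨Φ, i, rfl⟩ := exists_elem_eq y
      obtain ⟨Φ, rfl⟩ := α.surjective Φ
      exact ⟨_, Φ, i, rfl, rfl⟩
  have hle : ∀ ⦃x y x' y'⦄, R x y → R x' y' → (x ≤ x' ↔ y ≤ y') := by
    rintro _ _ _ _ ⟨Φ, i, rfl, rfl⟩ ⟨Ψ, j, rfl, rfl⟩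
    exact (elem_apply_le_elem_apply_iff hα).symm
  have hmap (κ : L ≃o M) : (∀ Φ, α Φ = Φ.map κ) ↔ ∀ x y, R x y → κ x = y := by
    simp only [← elem_injective.eq_iff, funext_iff, elem_map]
    constructor
    · rintro h _ _ ⟨Φ, i, rfl, rfl⟩
      exact (h Φ i).symm
    · exact fun h Φ i => (h _ _ ⟨Φ, i, rfl, rfl⟩).symm
  exact (existsUnique_congr hmap).2 (existsUnique_orderIso_of_biTotal hR hle)

end ThreeSpace

end LatticeFlag

theorem plucker_transformation_induced_by_collineation_or_duality_general {L M : Type*}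
    [Lattice L] [BoundedOrder L] [IsProjectiveThreeSpace L]
    [Lattice M] [BoundedOrder M] [IsProjectiveThreeSpace M]
    (α : LatticeFlag.PluckerTransformation L M) :
    (∃! κ : L ≃o M, ∀ Φ, α Φ = Φ.map κ) ∨ ∃! δ : L ≃o Mᵒᵈ, ∀ Φ, (α Φ).dual = Φ.map δ :=
  (LatticeFlag.forall_preservesPtAdjAt_or_dual α).imp
    LatticeFlag.existsUnique_forall_apply_eq_map LatticeFlag.existsUnique_forall_apply_eq_map

section Subspaces

variable {K V : Type*} [DivisionRing K] [AddCommGroup V] [Module K V] [FiniteDimensional K V]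

theorem submodule_covBy_iff_finrank_eq {S T : Submodule K V} :
    S ⋖ T ↔ S ≤ T ∧ Module.finrank K T = Module.finrank K S + 1 := by
  have finrank_eq_height (W : Submodule K V) : (Module.finrank K W : ℕ∞) = Order.height W := by
    rw [← Module.length_eq_finrank, Module.length_submodule]
  refine ⟨fun h => ⟨h.le, ?_⟩, fun ⟨hle, hrank⟩ => ⟨hle.lt_of_ne ?_, fun W hSW hWT => ?_⟩⟩
  · have hheight := height_eq_height_add_one_of_covBy h
    rw [← finrank_eq_height, ← finrank_eq_height] at hheight
    exact_mod_cast hheight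
  · rintro rfl
    omega
  · have hSW' := Submodule.finrank_lt_finrank_of_lt hSW
    have hWT' := Submodule.finrank_lt_finrank_of_lt hWT
    omega

theorem isProjectiveThreeSpace_submodule (hV : Module.finrank K V = 4) :
    IsProjectiveThreeSpace (Submodule K V) where
  krullDim_eq_four := by
    rw [← Module.coe_length, Module.length_eq_finrank, hV]
    rfl

/-- The two descriptions of a flag, by dimensions and as a maximal chain, agree. -/
def ProjFlag.latticeFlagIso (hV : Module.finrank K V = 4) :
    (ProjFlag.Related : ProjFlag K V → ProjFlag K V → Prop) ≃r
      (LatticeFlag.Related :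
        LatticeFlag (Submodule K V) → LatticeFlag (Submodule K V) → Prop) where
  toFun Φ :=
    { pt := Φ.pt
      ln := Φ.ln
      pl := Φ.pl
      bot_covBy_pt := submodule_covBy_iff_finrank_eq.2
        ⟨bot_le, by rw [Φ.finrank_pt, finrank_bot]⟩
      pt_covBy_ln := submodule_covBy_iff_finrank_eq.2
        ⟨Φ.pt_le_ln, by rw [Φ.finrank_ln, Φ.finrank_pt]⟩
      ln_covBy_pl := submodule_covBy_iff_finrank_eq.2
        ⟨Φ.ln_le_pl, by rw [Φ.finrank_pl, Φ.finrank_ln]⟩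
      pl_covBy_top := submodule_covBy_iff_finrank_eq.2
        ⟨le_top, by rw [finrank_top, hV, Φ.finrank_pl]⟩ }
  invFun Φ :=
    have hpt : Module.finrank K Φ.pt = 1 := by
      rw [(submodule_covBy_iff_finrank_eq.1 Φ.bot_covBy_pt).2, finrank_bot]
    have hln : Module.finrank K Φ.ln = 2 := by
      rw [(submodule_covBy_iff_finrank_eq.1 Φ.pt_covBy_ln).2, hpt]
    { pt := Φ.pt
      ln := Φ.ln
      pl := Φ.pl
      finrank_pt := hpt
      finrank_ln := hln
      finrank_pl := by rw [(submodule_covBy_iff_finrank_eq.1 Φ.ln_covBy_pl).2, hln]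
      pt_le_ln := Φ.pt_covBy_ln.le
      ln_le_pl := Φ.ln_covBy_pl.le }
  map_rel_iff' {Φ Ψ} := by
    simp only [Equiv.coe_fn_mk, LatticeFlag.Related, LatticeFlag.PtAdj, LatticeFlag.LnAdj,
      LatticeFlag.PlAdj, ProjFlag.Related]
    tauto

theorem ProjFlag.latticeFlagIso_eq_map_iff (hV : Module.finrank K V = 4) {Φ Ψ : ProjFlag K V}
    {κ : Submodule K V ≃o Submodule K V} :
    latticeFlagIso hV Φ = (latticeFlagIso hV Ψ).map κ ↔
      Φ.pt = κ Ψ.pt ∧ Φ.ln = κ Ψ.ln ∧ Φ.pl = κ Ψ.pl :=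
  LatticeFlag.ext_iff

theorem ProjFlag.dual_latticeFlagIso_eq_map_iff (hV : Module.finrank K V = 4)
    {Φ Ψ : ProjFlag K V} {δ : Submodule K V ≃o (Submodule K V)ᵒᵈ} :
    (latticeFlagIso hV Φ).dual = (latticeFlagIso hV Ψ).map δ ↔
      Φ.pt = OrderDual.ofDual (δ Ψ.pl) ∧ Φ.ln = OrderDual.ofDual (δ Ψ.ln) ∧
        Φ.pl = OrderDual.ofDual (δ Ψ.pt) :=
  LatticeFlag.ext_iff.trans ⟨fun ⟨hpl, hln, hpt⟩ => ⟨hpt, hln, hpl⟩,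
    fun ⟨hpt, hln, hpl⟩ => ⟨hpl, hln, hpt⟩⟩

end Subspaces

/-- **Theorem 1.** Every Plücker transformation of the flag space of a 3-dimensional
projective space is induced by a unique collineation or by a unique duality. -/
theorem plucker_transformation_induced_by_collineation_or_duality
    (K V : Type*) [DivisionRing K] [AddCommGroup V] [Module K V]
    (hV : Module.finrank K V = 4)
    (α : ProjFlag K V → ProjFlag K V) (hbij : Function.Bijective α)
    (hα : ∀ Φ Ψ : ProjFlag K V, Φ.Related Ψ ↔ (α Φ).Related (α Ψ)) :
    (∃! κ : Submodule K V ≃o Submodule K V, ∀ Φ : ProjFlag K V,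
        (α Φ).pt = κ Φ.pt ∧ (α Φ).ln = κ Φ.ln ∧ (α Φ).pl = κ Φ.pl) ∨
    (∃! δ : Submodule K V ≃ Submodule K V,
        (∀ a b : Submodule K V, a ≤ b ↔ δ b ≤ δ a) ∧
        ∀ Φ : ProjFlag K V,
          (α Φ).pt = δ Φ.pl ∧ (α Φ).ln = δ Φ.ln ∧ (α Φ).pl = δ Φ.pt) := by
  have : FiniteDimensional K V := Module.finite_of_finrank_pos (by omega)
  have : IsProjectiveThreeSpace (Submodule K V) := isProjectiveThreeSpace_submodule hV
  let e := ProjFlag.latticeFlagIso hV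
  let β : ProjFlag.Related ≃r ProjFlag.Related := ⟨Equiv.ofBijective α hbij, (hα _ _).symm⟩
  refine (plucker_transformation_induced_by_collineation_or_duality_general
    (e.symm.trans (β.trans e))).imp (fun hκ => ?_) fun hδ => ?_
  · refine (existsUnique_congr fun κ => ?_).1 hκ
    exact e.surjective.forall.trans (forall_congr' fun Φ => ProjFlag.latticeFlagIso_eq_map_iff hV)
  · refine (existsUnique_orderIso_orderDual_iff (p := fun δ => ∀ Φ : ProjFlag K V,
      (α Φ).pt = δ Φ.pl ∧ (α Φ).ln = δ Φ.ln ∧ (α Φ).pl = δ Φ.pt)).1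
      ((existsUnique_congr fun δ => ?_).1 hδ)
    exact e.surjective.forall.trans
      (forall_congr' fun Φ => ProjFlag.dual_latticeFlagIso_eq_map_iff hV)
end

section
/- Let η : 𝒢 → 𝒢 be a bijection of the flag variety such that for all x, y ∈ 𝒢, x and y are related if and only if η(x) and η(y) are related. Then there exist a ring automorphism ζ of K and a ζ-semilinear bijection f : W → W such that for every x ∈ 𝒢, f maps x onto η(x) (i.e. the image under f of any spanning vector of x spans η(x)); moreover any two semilinear bijections of W with this property induce the same map on the set of 1-dimensional subspaces of W, i.e. η extends to a unique collineation of the subspace spanned by 𝒢. -/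
open TensorProduct

variable (K V : Type*) [Field K] [AddCommGroup V] [Module K V]

-- Helper instances (the canonical tensor product instances; registering them here merely
-- speeds up instance search, which otherwise gets lost unfolding `⋀[K]^2 V`).
noncomputable instance : AddCommGroup (↥(⋀[K]^2 V) ⊗[K] Module.Dual K V) :=
  TensorProduct.addCommGroup

noncomputable instance : AddCommGroup (V ⊗[K] (↥(⋀[K]^2 V) ⊗[K] Module.Dual K V)) :=
  TensorProduct.addCommGroup

/-- The wedge `q ∧ r` of two vectors, as an element of the second exterior power. -/
def wedge2 (q r : V) : ⋀[K]^2 V :=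
  ⟨ExteriorAlgebra.ιMulti K 2 ![q, r],
    ExteriorAlgebra.ιMulti_range K 2 (Set.mem_range_self _)⟩

/-- The 96-dimensional space `Ṽ = V ⊗ Λ²V ⊗ V*`. -/
abbrev FlagTensor := V ⊗[K] ↥(⋀[K]^2 V) ⊗[K] (Module.Dual K V)

/-- `x = φ(Φ)`: the 1-dimensional subspace `x` of `Ṽ` represents the flag `Φ`, i.e. `x` is
spanned by `p ⊗ (q ∧ r) ⊗ e*` where `p` spans the point of `Φ`, `q, r` is a basis of the
line of `Φ`, and `e*` is a linear form whose kernel is the plane of `Φ`. -/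
def IsFlagRep (Φ : ProjFlag K V) (x : Submodule K (FlagTensor K V)) : Prop :=
  ∃ (p q r : V) (e : Module.Dual K V),
    Submodule.span K {p} = Φ.pt ∧ Submodule.span K {q, r} = Φ.ln ∧
    LinearMap.ker e = Φ.pl ∧
    x = Submodule.span K {p ⊗ₜ[K] wedge2 K V q r ⊗ₜ[K] e}

/-- The flag variety `𝒢`: the set of all 1-dimensional subspaces `φ(Φ)` of `Ṽ` with `Φ` a
flag. -/
def flagVariety : Set (Submodule K (FlagTensor K V)) :=
  {x | ∃ Φ : ProjFlag K V, IsFlagRep K V Φ x}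

/-- Two points of the flag variety `𝒢` are related if they coincide or lie on a common
line entirely contained in `𝒢` (i.e. every 1-dimensional subspace of their join belongs
to `𝒢`). -/
def RelatedPts (x y : Submodule K (FlagTensor K V)) : Prop :=
  x = y ∨ (x ≠ y ∧ ∀ z : Submodule K (FlagTensor K V),
    Module.finrank K z = 1 → z ≤ x ⊔ y → z ∈ flagVariety K V)

/-- `W`: the subspace of `Ṽ` spanned by the union of all members of `𝒢`. -/
def spanFlagVariety : Submodule K (FlagTensor K V) :=
  Submodule.span K (⋃ x ∈ flagVariety K V, (x : Set (FlagTensor K V)))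

/-! A line of `𝒢` varies a single component of a flag and fixes the other two, so `η` is a
bijection of flags preserving the relation of differing in at most one component. Changes of the
point and of the plane commute, while a change of the line does not commute with the other two;
hence chordless squares of flags single out the line component, and `η` either preserves the
types of the components or interchanges points and planes.

In the first case `η` acts on points as a collineation of the projective space of `V`, so by the
fundamental theorem of projective geometry it comes from a semilinear bijection of `V`, which also
acts on `Λ²V` and `V*`. In the second case, compose with the polarity of a symmetric nondegenerate
form; the polarity itself is induced by identifying `V` with `V*` and applying the Hodge star of
`Λ²V`.

For uniqueness, two semilinear maps inducing the same map on a line of `𝒢` differ there by a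
scalar, and any two flags are joined by a chain of such lines. -/

section FundamentalTheorem

variable {K V K₂ V₂ : Type*} [Field K] [AddCommGroup V] [Module K V]
  [Field K₂] [AddCommGroup V₂] [Module K₂ V₂]

theorem linearIndependent_pair_of_notMem_span {x y : V} (hx : x ≠ 0) (hy : y ∉ K ∙ x) :
    LinearIndependent K ![x, y] :=
  (LinearIndependent.pair_iff' hx).2 fun a ha => hy (Submodule.mem_span_singleton.2 ⟨a, ha⟩)

theorem eq_of_span_add_eq_span_add {e : Module.Dual K V} {v x y : V} (hv : e v = 1)
    (hx : e x = 0) (hy : e y = 0) (h : (K ∙ (v + x)) = K ∙ (v + y)) : x = y := by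
  obtain ⟨a, ha⟩ := Submodule.mem_span_singleton.1 (h ▸ Submodule.mem_span_singleton_self (v + x))
  have ha1 : a = 1 := by simpa [hv, hx, hy] using congrArg e ha
  rw [ha1, one_smul] at ha
  exact (add_left_cancel ha).symm

theorem exists_span_singleton_eq_span_add {e : Module.Dual K V} {v y : V} (hv : e v = 1)
    (hy : e y ≠ 0) : ∃ x, e x = 0 ∧ (K ∙ y) = K ∙ (v + x) := by
  refine ⟨(e y)⁻¹ • y - v, by simp [hv, hy], ?_⟩
  rw [add_sub_cancel, Submodule.span_singleton_smul_eq (IsUnit.mk0 _ (inv_ne_zero hy))]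

theorem span_sup_span_add_inf_ker {e : Module.Dual K V} {v x : V} (hv : e v = 1) (hx : e x = 0) :
    ((K ∙ v) ⊔ (K ∙ (v + x))) ⊓ LinearMap.ker e = K ∙ x := by
  ext z
  simp only [← Submodule.span_insert, Submodule.mem_inf, Submodule.mem_span_pair,
    Submodule.mem_span_singleton, LinearMap.mem_ker]
  constructor
  · rintro ⟨⟨a, b, rfl⟩, hz⟩
    have hab : a + b = 0 := by simpa [hv, hx] using hz
    exact ⟨b, by linear_combination (norm := module) -hab • v⟩
  · rintro ⟨a, rfl⟩
    exact ⟨⟨-a, a, by module⟩, by simp [hx]⟩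

theorem span_add_sup_inf_span_add_sup {e : Module.Dual K V} {v x y : V} (hv : e v = 1)
    (hx : e x = 0) (hy : e y = 0) (hxy : LinearIndependent K ![x, y]) :
    ((K ∙ (v + x)) ⊔ (K ∙ y)) ⊓ ((K ∙ (v + y)) ⊔ (K ∙ x)) = K ∙ (v + (x + y)) := by
  ext z
  simp only [← Submodule.span_insert, Submodule.mem_inf, Submodule.mem_span_pair,
    Submodule.mem_span_singleton]
  constructor
  · rintro ⟨⟨a, b, rfl⟩, c, d, h⟩
    have hca : c = a := by simpa [hv, hx, hy] using congrArg e h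
    subst hca
    have := LinearIndependent.pair_iff.1 hxy (c - d) (b - c)
      (by linear_combination (norm := module) -h)
    exact ⟨c, by linear_combination (norm := module) -(this.2 • y)⟩
  · rintro ⟨a, rfl⟩
    exact ⟨⟨a, a, by module⟩, a, a, by module⟩

theorem exists_dual_ker_eq_of_isCompl {U : Submodule K V} {w : V} (hw : w ≠ 0)
    (hU : IsCompl (K ∙ w) U) : ∃ e : Module.Dual K V, e w = 1 ∧ LinearMap.ker e = U := by
  have hwU : w ∉ U := fun h =>
    hw (by simpa using hU.disjoint.le_bot ⟨Submodule.mem_span_singleton_self w, h⟩)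
  obtain ⟨e, hew, hUe⟩ := Submodule.exists_le_ker_of_notMem hwU
  refine ⟨(e w)⁻¹ • e, by simp [hew], ?_⟩
  rw [LinearMap.ker_smul _ _ (inv_ne_zero hew)]
  refine (eq_of_le_of_inf_le_of_sup_le hUe (z := K ∙ w) ?_ ?_).symm
  · rintro x ⟨hx, hxw⟩
    obtain ⟨a, rfl⟩ := Submodule.mem_span_singleton.1 hxw
    have ha : a = 0 := by simpa [hew] using hx
    simp [ha]
  · rw [sup_comm U, hU.sup_eq_top]
    exact le_top

theorem isCompl_span_ker {e : Module.Dual K V} {v : V} (hv : e v = 1) :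
    IsCompl (K ∙ v) (LinearMap.ker e) := by
  refine ⟨Submodule.disjoint_def.2 fun x hx hxe => ?_, codisjoint_iff.2 ?_⟩
  · obtain ⟨a, rfl⟩ := Submodule.mem_span_singleton.1 hx
    have ha : a = 0 := by simpa [hv] using hxe
    rw [ha, zero_smul]
  · exact LinearMap.span_singleton_sup_ker_eq_top e (by simp [hv])

theorem exists_map_span_singleton_eq (Φ : Submodule K V ≃o Submodule K₂ V₂) {x : V} (hx : x ≠ 0) :
    ∃ y ≠ 0, Φ (K ∙ x) = K₂ ∙ y :=
  (atom_iff_nonzero_span _).1 ((Φ.isAtom_iff _).2 (nonzero_span_atom x hx))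

/-- Affine frames for an isomorphism of subspace lattices: `Φ` matches the hyperplanes `ker e` and
`ker e'`, and the points `⟨v⟩` and `⟨w⟩` outside them. Points off `ker e` are then uniquely
`⟨v + x⟩` with `x ∈ ker e`. -/
structure IsAffineFrame (Φ : Submodule K V ≃o Submodule K₂ V₂) (e : Module.Dual K V) (v : V)
    (e' : Module.Dual K₂ V₂) (w : V₂) : Prop where
  apply_left : e v = 1
  apply_right : e' w = 1
  map_span : Φ (K ∙ v) = K₂ ∙ w
  map_ker : Φ (LinearMap.ker e) = LinearMap.ker e'

theorem exists_isAffineFrame (Φ : Submodule K V ≃o Submodule K₂ V₂) {e : Module.Dual K V} {v : V}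
    (hv : e v = 1) : ∃ e' w, IsAffineFrame Φ e v e' w := by
  obtain ⟨w, hw, hvw⟩ := exists_map_span_singleton_eq Φ (x := v) (by rintro rfl; simp at hv)
  obtain ⟨e', hew, he'⟩ := exists_dual_ker_eq_of_isCompl hw (hvw ▸ Φ.isCompl (isCompl_span_ker hv))
  exact ⟨e', w, hv, hew, hvw, he'.symm⟩

namespace IsAffineFrame

variable {Φ : Submodule K V ≃o Submodule K₂ V₂} {e : Module.Dual K V} {v : V}
  {e' : Module.Dual K₂ V₂} {w : V₂}

theorem symm (h : IsAffineFrame Φ e v e' w) : IsAffineFrame Φ.symm e' w e v :=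
  ⟨h.apply_right, h.apply_left, by rw [← h.map_span, Φ.symm_apply_apply],
    by rw [← h.map_ker, Φ.symm_apply_apply]⟩

theorem exists_map_span_add (h : IsAffineFrame Φ e v e' w) {x : V} (hx : e x = 0) :
    ∃ y, e' y = 0 ∧ Φ (K ∙ (v + x)) = K₂ ∙ (w + y) := by
  have hvx : e (v + x) = 1 := by simp [h.apply_left, hx]
  obtain ⟨y, -, hy⟩ := exists_map_span_singleton_eq Φ (x := v + x) (by intro h0; simp [h0] at hvx)
  have hy' : e' y ≠ 0 := by
    intro hy0
    have hle : Φ (K ∙ (v + x)) ≤ Φ (LinearMap.ker e) := by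
      rwa [hy, h.map_ker, Submodule.span_singleton_le_iff_mem]
    rw [Φ.le_iff_le, Submodule.span_singleton_le_iff_mem, LinearMap.mem_ker, hvx] at hle
    exact one_ne_zero hle
  rw [hy]
  exact exists_span_singleton_eq_span_add h.apply_right hy'

theorem map_span_of_map_span_add (h : IsAffineFrame Φ e v e' w) {x : V} {y : V₂} (hx : e x = 0)
    (hy : e' y = 0) (hxy : Φ (K ∙ (v + x)) = K₂ ∙ (w + y)) : Φ (K ∙ x) = K₂ ∙ y := by
  rw [← span_sup_span_add_inf_ker h.apply_left hx, Φ.map_inf, Φ.map_sup, hxy, h.map_span,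
    h.map_ker, span_sup_span_add_inf_ker h.apply_right hy]

theorem exists_equiv (h : IsAffineFrame Φ e v e' w) :
    ∃ H : LinearMap.ker e ≃ LinearMap.ker e',
      ∀ x : LinearMap.ker e, Φ (K ∙ (v + (x : V))) = K₂ ∙ (w + (H x : V₂)) := by
  choose H hH0 hH using fun x : LinearMap.ker e => h.exists_map_span_add x.2
  refine ⟨Equiv.ofBijective (fun x => ⟨H x, hH0 x⟩) ⟨fun x y hxy => ?_, fun y => ?_⟩, hH⟩
  · refine Subtype.ext (eq_of_span_add_eq_span_add h.apply_left x.2 y.2 (Φ.injective ?_))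
    rw [hH, hH, Subtype.mk.inj hxy]
  · obtain ⟨x, hx, hxy⟩ := h.symm.exists_map_span_add y.2
    refine ⟨⟨x, hx⟩, Subtype.ext (eq_of_span_add_eq_span_add h.apply_right (hH0 _) y.2 ?_)⟩
    rw [← hH, ← hxy, Φ.apply_symm_apply]

section

variable {H : LinearMap.ker e ≃ LinearMap.ker e'}

theorem map_span_coe (h : IsAffineFrame Φ e v e' w)
    (hH : ∀ x : LinearMap.ker e, Φ (K ∙ (v + (x : V))) = K₂ ∙ (w + (H x : V₂)))
    (x : LinearMap.ker e) : Φ (K ∙ (x : V)) = K₂ ∙ (H x : V₂) :=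
  h.map_span_of_map_span_add x.2 (H x).2 (hH x)

theorem mem_span_iff (h : IsAffineFrame Φ e v e' w)
    (hH : ∀ x : LinearMap.ker e, Φ (K ∙ (v + (x : V))) = K₂ ∙ (w + (H x : V₂)))
    (x y : LinearMap.ker e) : H y ∈ K₂ ∙ H x ↔ y ∈ K ∙ x := by
  have key : (K₂ ∙ (H y : V₂)) ≤ K₂ ∙ (H x : V₂) ↔ (K ∙ (y : V)) ≤ K ∙ (x : V) := by
    rw [← h.map_span_coe hH, ← h.map_span_coe hH, Φ.le_iff_le]
  simpa [Submodule.mem_span_singleton, Subtype.ext_iff] using key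

theorem map_zero (h : IsAffineFrame Φ e v e' w)
    (hH : ∀ x : LinearMap.ker e, Φ (K ∙ (v + (x : V))) = K₂ ∙ (w + (H x : V₂))) : H 0 = 0 := by
  have h0 := h.map_span_coe hH 0
  rw [Submodule.coe_zero, Submodule.span_zero_singleton, Φ.map_bot] at h0
  exact Subtype.ext (Submodule.span_singleton_eq_bot.1 h0.symm)

theorem map_add_of_notMem_span (h : IsAffineFrame Φ e v e' w)
    (hH : ∀ x : LinearMap.ker e, Φ (K ∙ (v + (x : V))) = K₂ ∙ (w + (H x : V₂)))
    {x y : LinearMap.ker e} (hy : y ∉ K ∙ x) : H (x + y) = H x + H y := by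
  obtain rfl | hx := eq_or_ne x 0
  · rw [h.map_zero hH, zero_add, zero_add]
  have hli : LinearIndependent K ![(x : V), y] :=
    linearIndependent_pair_of_notMem_span (by simpa using hx)
      (by simpa [Submodule.mem_span_singleton, Subtype.ext_iff] using hy)
  have hy' : H y ∉ K₂ ∙ H x := by rwa [h.mem_span_iff hH]
  have hx' : H x ≠ 0 := by
    rw [← h.map_zero hH]
    exact H.injective.ne hx
  have hli' : LinearIndependent K₂ ![(H x : V₂), H y] :=
    linearIndependent_pair_of_notMem_span (by simpa using hx')
      (by simpa [Submodule.mem_span_singleton, Subtype.ext_iff] using hy')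
  refine Subtype.ext (eq_of_span_add_eq_span_add h.apply_right (H (x + y)).2 (H x + H y).2 ?_)
  rw [← hH, Submodule.coe_add, Submodule.coe_add,
    ← span_add_sup_inf_span_add_sup h.apply_left x.2 y.2 hli, Φ.map_inf, Φ.map_sup, Φ.map_sup, hH,
    hH, h.map_span_coe hH, h.map_span_coe hH,
    span_add_sup_inf_span_add_sup h.apply_right (H x).2 (H y).2 hli']

theorem map_add (h : IsAffineFrame Φ e v e' w)
    (hH : ∀ x : LinearMap.ker e, Φ (K ∙ (v + (x : V))) = K₂ ∙ (w + (H x : V₂)))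
    (hrank : ∀ x : LinearMap.ker e, ∃ y, y ∉ K ∙ x) (x y : LinearMap.ker e) :
    H (x + y) = H x + H y := by
  by_cases hy : y ∈ K ∙ x
  · obtain ⟨a, rfl⟩ := Submodule.mem_span_singleton.1 hy
    obtain ⟨z, hz⟩ := hrank x
    have hz_smul (b : K) : z ∉ K ∙ (b • x) := fun hzb =>
      hz (Submodule.span_singleton_smul_le K b x hzb)
    have hz_add : a • x + z ∉ K ∙ x := by rwa [Submodule.add_mem_iff_right _ hy]
    refine add_right_cancel (b := H z) ?_
    calc H (x + a • x) + H z
        = H (x + (a • x + z)) := by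
          rw [← h.map_add_of_notMem_span hH, add_assoc]
          simpa [add_smul] using hz_smul (1 + a)
      _ = H x + H (a • x) + H z := by
          rw [h.map_add_of_notMem_span hH hz_add, h.map_add_of_notMem_span hH (hz_smul a),
            add_assoc]
  · exact h.map_add_of_notMem_span hH hy

end

end IsAffineFrame

theorem exists_smul_eq_of_mem_span_iff (H : V ≃+ V₂)
    (hH : ∀ x y, H y ∈ K₂ ∙ H x ↔ y ∈ K ∙ x) (hrank : ∀ x : V, ∃ y, y ∉ K ∙ x) :
    ∃ ζ : K → K₂, ∀ c x, H (c • x) = ζ c • H x := by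
  have hx (c : K) (x : V) : ∃ d : K₂, d • H x = H (c • x) :=
    Submodule.mem_span_singleton.1 ((hH _ _).2 (Submodule.mem_span_singleton.2 ⟨c, rfl⟩))
  have hindep {x y : V} (hx0 : x ≠ 0) (hy : y ∉ K ∙ x) {c : K} {d d' : K₂}
      (hd : d • H x = H (c • x)) (hd' : d' • H y = H (c • y)) : d = d' := by
    obtain ⟨t, ht⟩ := hx c (x + y)
    rw [smul_add, map_add, map_add, ← hd, ← hd'] at ht
    have hli := linearIndependent_pair_of_notMem_span (by simpa using hx0 : H x ≠ 0)
      (by rwa [hH] : H y ∉ K₂ ∙ H x)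
    have := LinearIndependent.pair_iff.1 hli (t - d) (t - d')
      (by linear_combination (norm := module) ht)
    exact (sub_eq_zero.1 this.1).symm.trans (sub_eq_zero.1 this.2)
  obtain ⟨x₀, hx₀⟩ := hrank 0
  have hx₀' : x₀ ≠ 0 := by rintro rfl; simp at hx₀
  obtain ⟨y₀, hy₀⟩ := hrank x₀
  choose ζ hζ using fun c => hx c x₀
  refine ⟨ζ, fun c x => ?_⟩
  obtain ⟨d, hd⟩ := hx c x
  by_cases hxx : x ∈ K ∙ x₀
  · obtain ⟨a, rfl⟩ := Submodule.mem_span_singleton.1 hxx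
    obtain rfl | ha := eq_or_ne a 0
    · simp
    obtain ⟨d', hd'⟩ := hx c y₀
    have hya : y₀ ∉ K ∙ (a • x₀) := by
      rwa [Submodule.span_singleton_smul_eq (IsUnit.mk0 a ha)]
    rw [← hd, hindep hx₀' hy₀ (hζ c) hd', hindep (smul_ne_zero ha hx₀') hya hd hd']
  · rw [← hd, hindep hx₀' hxx (hζ c) hd]

theorem exists_ringEquiv_smul_eq (H : V ≃+ V₂) (hH : ∀ x y, H y ∈ K₂ ∙ H x ↔ y ∈ K ∙ x)
    (hrank : ∀ x : V, ∃ y, y ∉ K ∙ x) :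
    ∃ ζ : K ≃+* K₂, ∀ c x, H (c • x) = ζ c • H x := by
  obtain ⟨ζ, hζ⟩ := exists_smul_eq_of_mem_span_iff H hH hrank
  obtain ⟨x₀, hx₀⟩ := hrank 0
  have hHx₀ : H x₀ ≠ 0 := by
    rw [Ne, map_eq_zero_iff H H.injective]
    rintro rfl
    exact hx₀ (zero_mem _)
  have cancel {a b : K₂} (hab : a • H x₀ = b • H x₀) : a = b := smul_left_injective K₂ hHx₀ hab
  let ξ : K →+* K₂ :=
    { toFun := ζ
      map_one' := cancel (by rw [← hζ, one_smul, one_smul])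
      map_mul' := fun a b => cancel (by rw [← hζ, mul_smul, hζ, hζ, mul_smul])
      map_zero' := cancel (by rw [← hζ, zero_smul, zero_smul, map_zero])
      map_add' := fun a b => cancel (by rw [← hζ, add_smul, map_add, hζ, hζ, add_smul]) }
  have hsurj : Function.Surjective ξ := by
    intro d
    obtain ⟨c, hc⟩ := Submodule.mem_span_singleton.1 ((hH x₀ (H.symm (d • H x₀))).1 (by
      rw [H.apply_symm_apply]
      exact Submodule.smul_mem _ _ (Submodule.mem_span_singleton_self _)))
    exact ⟨c, cancel ((hζ c x₀).symm.trans (by rw [hc, H.apply_symm_apply]))⟩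
  exact ⟨RingEquiv.ofBijective ξ ⟨ξ.injective, hsurj⟩, hζ⟩

namespace IsAffineFrame

variable {Φ : Submodule K V ≃o Submodule K₂ V₂} {e : Module.Dual K V} {v : V}
  {e' : Module.Dual K₂ V₂} {w : V₂} {H : LinearMap.ker e ≃+ LinearMap.ker e'} {ζ : K ≃+* K₂}

theorem map_span_eq (h : IsAffineFrame Φ e v e' w)
    (hH : ∀ x : LinearMap.ker e, Φ (K ∙ (v + (x : V))) = K₂ ∙ (w + (H x : V₂)))
    (hζ : ∀ c x, H (c • x) = ζ c • H x) (c : K) (x : LinearMap.ker e) :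
    Φ (K ∙ (c • v + (x : V))) = K₂ ∙ (ζ c • w + (H x : V₂)) := by
  obtain rfl | hc := eq_or_ne c 0
  · simpa using h.map_span_coe (H := H.toEquiv) hH x
  · have hζc : IsUnit (ζ c) := (IsUnit.mk0 c hc).map ζ
    obtain ⟨y, rfl⟩ : ∃ y, x = c • y := ⟨c⁻¹ • x, (smul_inv_smul₀ hc x).symm⟩
    rw [hζ, Submodule.coe_smul, Submodule.coe_smul, ← smul_add, ← smul_add,
      Submodule.span_singleton_smul_eq (IsUnit.mk0 c hc), Submodule.span_singleton_smul_eq hζc, hH]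

theorem exists_semilinearMap (h : IsAffineFrame Φ e v e' w)
    (hH : ∀ x : LinearMap.ker e, Φ (K ∙ (v + (x : V))) = K₂ ∙ (w + (H x : V₂)))
    (hζ : ∀ c x, H (c • x) = ζ c • H x) :
    ∃ f : V →ₛₗ[(ζ : K →+* K₂)] V₂, ∀ x, Φ (K ∙ x) = K₂ ∙ f x := by
  let π : V →ₗ[K] LinearMap.ker e :=
    (LinearMap.id - e.smulRight v).codRestrict _ fun x => by simp [h.apply_left]
  have hπ (x : V) : e x • v + (π x : V) = x := add_sub_cancel _ _
  refine ⟨{ toFun := fun x => ζ (e x) • w + (H (π x) : V₂)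
            map_add' := fun x y => ?_
            map_smul' := fun c x => ?_ }, fun x => ?_⟩
  · simp only [_root_.map_add, Submodule.coe_add]
    module
  · simp only [map_smul, smul_eq_mul, map_mul, hζ, Submodule.coe_smul, smul_add, mul_smul]
    rfl
  · conv_lhs => rw [← hπ x]
    exact h.map_span_eq hH hζ _ _

end IsAffineFrame

theorem bijective_of_map_span_eq (Φ : Submodule K V ≃o Submodule K₂ V₂) {ζ : K ≃+* K₂}
    {f : V →ₛₗ[(ζ : K →+* K₂)] V₂} (hf : ∀ x, Φ (K ∙ x) = K₂ ∙ f x) : Function.Bijective f := by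
  constructor
  · refine (injective_iff_map_eq_zero f).2 fun x hx => ?_
    have := hf x
    rwa [hx, Submodule.span_zero_singleton, map_eq_bot_iff, Submodule.span_singleton_eq_bot]
      at this
  · intro y
    obtain rfl | hy := eq_or_ne y 0
    · exact ⟨0, map_zero f⟩
    obtain ⟨x, -, hx⟩ := exists_map_span_singleton_eq Φ.symm hy
    have hxy : (K₂ ∙ f x) = K₂ ∙ y := by rw [← hf, ← hx, Φ.apply_symm_apply]
    obtain ⟨c, hc⟩ := Submodule.mem_span_singleton.1 (hxy ▸ Submodule.mem_span_singleton_self y)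
    exact ⟨ζ.symm c • x, by simpa using hc⟩

attribute [local instance] RingHomInvPair.of_ringEquiv RingHomInvPair.of_ringEquiv_symm

theorem map_eq_of_map_span_eq (Φ : Submodule K V ≃o Submodule K₂ V₂) {ζ : K ≃+* K₂}
    {f : V ≃ₛₗ[(ζ : K →+* K₂)] V₂} (hf : ∀ x, Φ (K ∙ x) = K₂ ∙ f x) (S : Submodule K V) :
    Φ S = S.map (f : V →ₛₗ[(ζ : K →+* K₂)] V₂) := by
  refine SetLike.ext fun y => ?_
  obtain ⟨x, rfl⟩ := f.surjective y
  rw [← Submodule.span_singleton_le_iff_mem, ← hf, Φ.le_iff_le,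
    Submodule.span_singleton_le_iff_mem]
  simp

theorem exists_notMem_span_pair (hrank : 2 < Module.rank K V) (x y : V) :
    ∃ z, z ∉ Submodule.span K {x, y} := by
  by_contra! h
  have hle := (rank_span_le (R := K) ({x, y} : Set V)).trans Cardinal.mk_insert_le
  rw [Submodule.eq_top_iff'.2 h, rank_top, Cardinal.mk_singleton, one_add_one_eq_two] at hle
  exact hrank.not_ge hle

/-- **Fundamental theorem of projective geometry**. -/
theorem exists_semilinearEquiv_of_orderIso (hrank : 2 < Module.rank K V)
    (Φ : Submodule K V ≃o Submodule K₂ V₂) :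
    ∃ (ζ : K ≃+* K₂) (f : V ≃ₛₗ[(ζ : K →+* K₂)] V₂), ∀ S, Φ S = S.map f.toLinearMap := by
  obtain ⟨v, hv⟩ := exists_notMem_span_pair hrank 0 0
  obtain ⟨e, he⟩ := Module.Projective.exists_dual_eq_one K (x := v) (by rintro rfl; simp at hv)
  obtain ⟨e', w, h⟩ := exists_isAffineFrame Φ he
  obtain ⟨H, hH⟩ := h.exists_equiv
  have hker (x : LinearMap.ker e) : ∃ y, y ∉ K ∙ x := by
    obtain ⟨z, hz⟩ := exists_notMem_span_pair hrank v x
    refine ⟨⟨z - e z • v, by simp [he]⟩, fun hzx => hz ?_⟩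
    obtain ⟨a, ha⟩ := Submodule.mem_span_singleton.1 hzx
    have ha' : a • (x : V) = z - e z • v := congrArg Subtype.val ha
    exact Submodule.mem_span_pair.2 ⟨e z, a, by rw [ha', add_sub_cancel]⟩
  let A : LinearMap.ker e ≃+ LinearMap.ker e' := AddEquiv.mk' H (h.map_add hH hker)
  obtain ⟨ζ, hζ⟩ := exists_ringEquiv_smul_eq A (h.mem_span_iff hH) hker
  obtain ⟨f, hf⟩ := h.exists_semilinearMap (H := A) hH hζ
  let F := LinearEquiv.ofBijective f (bijective_of_map_span_eq Φ hf)
  exact ⟨ζ, F, map_eq_of_map_span_eq Φ (f := F) hf⟩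

end FundamentalTheorem

section Collineation

open scoped LinearAlgebra.Projectivization

open Projectivization

variable {K V K₂ V₂ : Type*} [Field K] [AddCommGroup V] [Module K V]
  [Field K₂] [AddCommGroup V₂] [Module K₂ V₂]

/-- A collineation between projective spaces: a bijection of the points which preserves, in both
directions, the incidence of a point with the join of two points. -/
def IsCollineation (σ : ℙ K V ≃ ℙ K₂ V₂) : Prop :=
  ∀ P Q R : ℙ K V, (σ P).submodule ≤ (σ Q).submodule ⊔ (σ R).submodule ↔
    P.submodule ≤ Q.submodule ⊔ R.submodule

theorem mem_subspace_of_submodule_le_sup {S : Projectivization.Subspace K V} {P Q R : ℙ K V}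
    (hQ : Q ∈ S) (hR : R ∈ S) (h : P.submodule ≤ Q.submodule ⊔ R.submodule) : P ∈ S := by
  obtain ⟨T, rfl⟩ := Submodule.projectivization.surjective S
  rw [Submodule.mem_projectivization_iff_submodule_le] at *
  exact h.trans (sup_le hQ hR)

theorem submodule_mk_add_le_sup {v w : V} (hv : v ≠ 0) (hw : w ≠ 0) (hvw : v + w ≠ 0) :
    (mk K (v + w) hvw).submodule ≤ (mk K v hv).submodule ⊔ (mk K w hw).submodule := by
  simp only [submodule_mk, Submodule.span_singleton_le_iff_mem]
  exact Submodule.add_mem_sup (Submodule.mem_span_singleton_self v)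
    (Submodule.mem_span_singleton_self w)

namespace IsCollineation

variable {σ : ℙ K V ≃ ℙ K₂ V₂}

theorem symm (h : IsCollineation σ) : IsCollineation σ.symm := fun P Q R => by
  rw [← h, σ.apply_symm_apply, σ.apply_symm_apply, σ.apply_symm_apply]

/-- The image of a projective subspace under a collineation. -/
def subspaceMap (h : IsCollineation σ) (S : Projectivization.Subspace K V) :
    Projectivization.Subspace K₂ V₂ where
  carrier := {P | σ.symm P ∈ S}
  mem_add' _ _ hv hw hvw hvS hwS :=
    mem_subspace_of_submodule_le_sup hvS hwS <|
      (h.symm _ _ _).2 (submodule_mk_add_le_sup hv hw hvw)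

theorem mem_subspaceMap (h : IsCollineation σ) {S : Projectivization.Subspace K V} {P : ℙ K₂ V₂} :
    P ∈ h.subspaceMap S ↔ σ.symm P ∈ S :=
  Iff.rfl

/-- The isomorphism of lattices of projective subspaces induced by a collineation. -/
def subspaceOrderIso (h : IsCollineation σ) :
    Projectivization.Subspace K V ≃o Projectivization.Subspace K₂ V₂ where
  toFun := h.subspaceMap
  invFun := h.symm.subspaceMap
  left_inv S := SetLike.ext fun P => by simp [mem_subspaceMap]
  right_inv S := SetLike.ext fun P => by simp [mem_subspaceMap]
  map_rel_iff' := by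
    refine fun {S T} => ⟨fun hST P hP => ?_, fun hST P hP => hST hP⟩
    simpa [mem_subspaceMap] using @hST (σ P) (by simpa [mem_subspaceMap] using hP)

theorem exists_orderIso (h : IsCollineation σ) :
    ∃ Φ : Submodule K V ≃o Submodule K₂ V₂, ∀ P : ℙ K V, Φ P.submodule = (σ P).submodule := by
  refine ⟨Projectivization.Subspace.submodule.symm.trans
    (h.subspaceOrderIso.trans Projectivization.Subspace.submodule),
    fun P => Submodule.projectivization.injective (SetLike.ext fun Q => ?_)⟩
  change Q ∈ (h.subspaceMap P.submodule.projectivization).submodule.projectivization ↔ _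
  rw [OrderIso.symm_apply_apply, mem_subspaceMap,
    Submodule.mem_projectivization_iff_submodule_le,
    Submodule.mem_projectivization_iff_submodule_le]
  simpa using h.symm Q (σ P) (σ P)

attribute [local instance] RingHomInvPair.of_ringEquiv RingHomInvPair.of_ringEquiv_symm

theorem exists_semilinearEquiv (hrank : 2 < Module.rank K V) (h : IsCollineation σ) :
    ∃ (ζ : K ≃+* K₂) (f : V ≃ₛₗ[(ζ : K →+* K₂)] V₂),
      ∀ P : ℙ K V, (σ P).submodule = P.submodule.map f.toLinearMap := by
  obtain ⟨Φ, hΦ⟩ := h.exists_orderIso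
  obtain ⟨ζ, f, hf⟩ := exists_semilinearEquiv_of_orderIso hrank Φ
  exact ⟨ζ, f, fun P => by rw [← hΦ, hf]⟩

end IsCollineation

end Collineation

section Grassmann

open Module

variable {K V : Type*} [DivisionRing K] [AddCommGroup V] [Module K V] [FiniteDimensional K V]

theorem sup_eq_of_finrank_eq_succ {S T R : Submodule K V} {n : ℕ} (hS : finrank K S = n)
    (hT : finrank K T = n) (hR : finrank K R = n + 1) (hSR : S ≤ R) (hTR : T ≤ R) (hST : S ≠ T) :
    S ⊔ T = R := by
  refine Submodule.eq_of_le_of_finrank_le (sup_le hSR hTR) ?_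
  rw [hR, Nat.succ_le_iff, ← hS]
  refine Submodule.finrank_lt_finrank_of_lt (left_lt_sup.2 fun hTS => hST ?_)
  exact (Submodule.eq_of_le_of_finrank_eq hTS (hT.trans hS.symm)).symm

theorem finrank_inf_of_finrank_eq_succ {S T R : Submodule K V} {n : ℕ}
    (hS : finrank K S = n + 1) (hT : finrank K T = n + 1) (hR : finrank K R = n + 2)
    (hSR : S ≤ R) (hTR : T ≤ R) (hST : S ≠ T) : finrank K (S ⊓ T : Submodule K V) = n := by
  have := Submodule.finrank_sup_add_finrank_inf_eq S T
  rw [sup_eq_of_finrank_eq_succ hS hT hR hSR hTR hST] at this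
  omega

theorem finrank_sup_of_finrank_eq_succ {S T C : Submodule K V} {n : ℕ} (hC : finrank K C = n)
    (hS : finrank K S = n + 1) (hT : finrank K T = n + 1) (hCS : C ≤ S) (hCT : C ≤ T)
    (hST : S ≠ T) : finrank K (S ⊔ T : Submodule K V) = n + 2 := by
  have hsum := Submodule.finrank_sup_add_finrank_inf_eq S T
  have hle : finrank K C ≤ finrank K (S ⊓ T : Submodule K V) :=
    Submodule.finrank_mono (le_inf hCS hCT)
  have hlt : finrank K (S ⊓ T : Submodule K V) < finrank K S := by
    refine Submodule.finrank_lt_finrank_of_lt (inf_lt_left.2 fun h => hST ?_)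
    exact Submodule.eq_of_le_of_finrank_eq h (hS.trans hT.symm)
  omega

theorem exists_finrank_eq_succ_not_le {S U T : Submodule K V} (hSU : S ≤ U) (hUT : U < T) :
    ∃ R : Submodule K V, finrank K R = finrank K S + 1 ∧ S ≤ R ∧ R ≤ T ∧ ¬ R ≤ U := by
  obtain ⟨x, hxT, hxU⟩ := SetLike.exists_of_lt hUT
  exact ⟨S ⊔ K ∙ x, Submodule.finrank_sup_span_singleton fun hxS => hxU (hSU hxS), le_sup_left,
    sup_le (hSU.trans hUT.le) (by simpa), by simp [hxU]⟩

end Grassmann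

section Flags

open Module

variable {K V : Type*} [DivisionRing K] [AddCommGroup V] [Module K V]

namespace ProjFlag

/-- The point, the line and the plane of a flag, indexed by their projective dimension. -/
def comp (F : ProjFlag K V) : Fin 3 → Submodule K V :=
  ![F.pt, F.ln, F.pl]

@[simp] theorem comp_zero (F : ProjFlag K V) : F.comp 0 = F.pt := rfl

@[simp] theorem comp_one (F : ProjFlag K V) : F.comp 1 = F.ln := rfl

@[simp] theorem comp_two (F : ProjFlag K V) : F.comp 2 = F.pl := rfl

theorem comp_injective : Function.Injective (comp : ProjFlag K V → Fin 3 → Submodule K V) := by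
  rintro ⟨⟩ ⟨⟩ h
  simpa [comp] using h

/-- `i`-adjacency of flags, in the sense of chamber systems: all components agree except possibly
the one of dimension `i`. -/
def AdjAt (i : Fin 3) (F G : ProjFlag K V) : Prop :=
  ∀ j ≠ i, F.comp j = G.comp j

/-- Adjacency of flags: they differ in at most one component. -/
def Adj (F G : ProjFlag K V) : Prop :=
  ∃ i, AdjAt i F G

variable {F G H X : ProjFlag K V} {i j : Fin 3}

theorem adjAt_zero : AdjAt 0 F G ↔ F.ln = G.ln ∧ F.pl = G.pl := by
  simp [AdjAt, Fin.forall_fin_succ]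

theorem adjAt_one : AdjAt 1 F G ↔ F.pt = G.pt ∧ F.pl = G.pl := by
  simp [AdjAt, Fin.forall_fin_succ]

theorem adjAt_two : AdjAt 2 F G ↔ F.pt = G.pt ∧ F.ln = G.ln := by
  simp [AdjAt, Fin.forall_fin_succ]

theorem AdjAt.refl (i : Fin 3) (F : ProjFlag K V) : AdjAt i F F := fun _ _ => rfl

theorem AdjAt.symm (h : AdjAt i F G) : AdjAt i G F := fun j hj => (h j hj).symm

theorem AdjAt.trans (h : AdjAt i F G) (h' : AdjAt i G H) : AdjAt i F H := fun j hj =>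
  (h j hj).trans (h' j hj)

theorem AdjAt.adj (h : AdjAt i F G) : Adj F G := ⟨i, h⟩

theorem Adj.symm : Adj F G → Adj G F := fun ⟨i, h⟩ => ⟨i, h.symm⟩

theorem AdjAt.eq_of_comp_eq (h : AdjAt i F G) (hi : F.comp i = G.comp i) : F = G :=
  comp_injective (funext fun j => if hj : j = i then hj ▸ hi else h j hj)

theorem AdjAt.eq_of_adjAt (h : AdjAt i F G) (h' : AdjAt j F G) (hij : i ≠ j) : F = G :=
  h.eq_of_comp_eq (h' i hij)

theorem AdjAt.not_adj (h : AdjAt i F G) (h' : AdjAt j F H) (hij : i ≠ j) (hFG : F ≠ G)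
    (hFH : F ≠ H) : ¬ Adj G H := by
  rintro ⟨k, hk⟩
  have hi : k = i := by
    by_contra hne
    exact hFG (h.eq_of_comp_eq ((h' i hij).trans (hk i (Ne.symm hne)).symm))
  have hj : k = j := by
    by_contra hne
    exact hFH (h'.eq_of_comp_eq ((h j hij.symm).trans (hk j (Ne.symm hne))))
  exact hij (hi.symm.trans hj)

section Incidence

variable [FiniteDimensional K V]

theorem AdjAt.pt_sup_pt (h : AdjAt 0 F G) (hFG : F ≠ G) : F.pt ⊔ G.pt = F.ln :=
  sup_eq_of_finrank_eq_succ F.finrank_pt G.finrank_pt F.finrank_ln F.pt_le_ln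
    ((adjAt_zero.1 h).1 ▸ G.pt_le_ln) fun hpt => hFG (h.eq_of_comp_eq hpt)

theorem AdjAt.ln_sup_ln (h : AdjAt 1 F G) (hFG : F ≠ G) : F.ln ⊔ G.ln = F.pl :=
  sup_eq_of_finrank_eq_succ F.finrank_ln G.finrank_ln F.finrank_pl F.ln_le_pl
    ((adjAt_one.1 h).2 ▸ G.ln_le_pl) fun hln => hFG (h.eq_of_comp_eq hln)

theorem eq_or_eq_of_square_zero_one (hFG : AdjAt 0 F G) (hGH : AdjAt 1 G H) (hHX : AdjAt 0 H X)
    (hXF : AdjAt 1 X F) : F = G ∨ G = H := by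
  refine or_iff_not_imp_left.2 fun hne => hGH.eq_of_comp_eq ?_
  have hpt : F.pt ≠ G.pt := fun hpt => hne (hFG.eq_of_comp_eq hpt)
  have hHX' : H ≠ X := by
    rintro rfl
    exact hpt ((adjAt_one.1 hXF).1.symm.trans (adjAt_one.1 hGH).1.symm)
  rw [comp_one, comp_one, ← (adjAt_zero.1 hFG).1, ← hFG.pt_sup_pt hne, ← hHX.pt_sup_pt hHX',
    (adjAt_one.1 hXF).1, (adjAt_one.1 hGH).1, sup_comm]

theorem eq_or_eq_of_square_one_two (hFG : AdjAt 1 F G) (hGH : AdjAt 2 G H) (hHX : AdjAt 1 H X)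
    (hXF : AdjAt 2 X F) : F = G ∨ G = H := by
  refine or_iff_not_imp_left.2 fun hne => hGH.eq_of_comp_eq ?_
  have hln : F.ln ≠ G.ln := fun hln => hne (hFG.eq_of_comp_eq hln)
  have hHX' : H ≠ X := by
    rintro rfl
    exact hln ((adjAt_two.1 hXF).2.symm.trans (adjAt_two.1 hGH).2.symm)
  rw [comp_two, comp_two, ← (adjAt_one.1 hFG).2, ← hFG.ln_sup_ln hne, ← hHX.ln_sup_ln hHX',
    (adjAt_two.1 hXF).2, (adjAt_two.1 hGH).2, sup_comm]

/-- Points and planes through a fixed line vary independently, while the flags with a fixed point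
or a fixed plane form projective planes: so chordless squares are of type `0, 2, 0, 2`. -/
theorem AdjAt.ne_one_of_square {a b c d : Fin 3} (hFG : AdjAt a F G) (hGH : AdjAt b G H)
    (hHX : AdjAt c H X) (hXF : AdjAt d X F) (hFH : ¬ Adj F H) (hGX : ¬ Adj G X) : a ≠ 1 := by
  have hab : a ≠ b := by rintro rfl; exact hFH (hFG.trans hGH).adj
  have hbc : b ≠ c := by rintro rfl; exact hGX (hGH.trans hHX).adj
  have hcd : c ≠ d := by rintro rfl; exact hFH (hHX.trans hXF).adj.symm
  have hda : d ≠ a := by rintro rfl; exact hGX (hXF.trans hFG).adj.symm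
  have hFG' : F ≠ G := by rintro rfl; exact hFH hGH.adj
  have hGH' : G ≠ H := by rintro rfl; exact hFH hFG.adj
  have hca : c = a := by
    by_contra hca
    exact hFG' (hFG.eq_of_comp_eq (((hGH a hab).trans (hHX a (Ne.symm hca))).trans
      (hXF a hda.symm)).symm)
  have hdb : d = b := by
    by_contra hdb
    exact hGH' (hGH.eq_of_comp_eq (((hHX b hbc).trans (hXF b (Ne.symm hdb))).trans
      (hFG b hab.symm)).symm)
  subst hca hdb
  rintro rfl
  obtain rfl | rfl : d = 0 ∨ d = 2 := by omega
  · obtain rfl | rfl := eq_or_eq_of_square_zero_one hGH hHX hXF hFG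
    · exact hGH' rfl
    · exact hGX hGH.adj
  · exact (eq_or_eq_of_square_one_two hFG hGH hHX hXF).elim hFG' hGH'

end Incidence

theorem pt_lt_ln (F : ProjFlag K V) : F.pt < F.ln :=
  Submodule.lt_of_le_of_finrank_lt_finrank F.pt_le_ln (by simp [F.finrank_pt, F.finrank_ln])

theorem ln_lt_pl (F : ProjFlag K V) : F.ln < F.pl :=
  Submodule.lt_of_le_of_finrank_lt_finrank F.ln_le_pl (by simp [F.finrank_ln, F.finrank_pl])

theorem exists_adjAt_two_adjAt_zero (hFG : AdjAt 0 F G) (hFX : AdjAt 2 F X) :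
    ∃ H, AdjAt 2 G H ∧ AdjAt 0 H X := by
  obtain ⟨hGln, -⟩ := adjAt_zero.1 hFG
  obtain ⟨-, hXln⟩ := adjAt_two.1 hFX
  exact ⟨⟨G.pt, F.ln, X.pl, G.finrank_pt, F.finrank_ln, X.finrank_pl, hGln ▸ G.pt_le_ln,
    hXln ▸ X.ln_le_pl⟩, adjAt_two.2 ⟨rfl, hGln.symm⟩, adjAt_zero.2 ⟨hXln, rfl⟩⟩

section Connectivity

variable {α : Sort*} {f : ProjFlag K V → α}

theorem eq_of_ln_eq (h₀ : ∀ F G, AdjAt 0 F G → f F = f G) (h₂ : ∀ F G, AdjAt 2 F G → f F = f G)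
    (hFG : F.ln = G.ln) : f F = f G := by
  let X : ProjFlag K V := ⟨F.pt, G.ln, G.pl, F.finrank_pt, G.finrank_ln, G.finrank_pl,
    hFG ▸ F.pt_le_ln, G.ln_le_pl⟩
  calc f F = f X := h₂ _ _ (adjAt_two.2 ⟨rfl, hFG⟩)
    _ = f G := h₀ _ _ (adjAt_zero.2 ⟨rfl, rfl⟩)

variable [FiniteDimensional K V]

theorem eq_of_pt_eq (h₁ : ∀ F G, AdjAt 1 F G → f F = f G) (h₂ : ∀ F G, AdjAt 2 F G → f F = f G)
    (hFG : F.pt = G.pt) : f F = f G := by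
  by_cases hln : F.ln = G.ln
  · exact h₂ _ _ (adjAt_two.2 ⟨hFG, hln⟩)
  have hsup : finrank K (F.ln ⊔ G.ln : Submodule K V) = 3 :=
    finrank_sup_of_finrank_eq_succ F.finrank_pt F.finrank_ln G.finrank_ln F.pt_le_ln
      (hFG ▸ G.pt_le_ln) hln
  let F' : ProjFlag K V :=
    ⟨F.pt, F.ln, _, F.finrank_pt, F.finrank_ln, hsup, F.pt_le_ln, le_sup_left⟩
  let G' : ProjFlag K V :=
    ⟨G.pt, G.ln, _, G.finrank_pt, G.finrank_ln, hsup, G.pt_le_ln, le_sup_right⟩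
  calc f F = f F' := h₂ _ _ (adjAt_two.2 ⟨rfl, rfl⟩)
    _ = f G' := h₁ _ _ (adjAt_one.2 ⟨hFG, rfl⟩)
    _ = f G := h₂ _ _ (adjAt_two.2 ⟨rfl, rfl⟩)

theorem eq_of_pl_eq (h₀ : ∀ F G, AdjAt 0 F G → f F = f G) (h₁ : ∀ F G, AdjAt 1 F G → f F = f G)
    (hFG : F.pl = G.pl) : f F = f G := by
  by_cases hln : F.ln = G.ln
  · exact h₀ _ _ (adjAt_zero.2 ⟨hln, hFG⟩)
  have hinf : finrank K (F.ln ⊓ G.ln : Submodule K V) = 1 :=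
    finrank_inf_of_finrank_eq_succ F.finrank_ln G.finrank_ln F.finrank_pl F.ln_le_pl
      (hFG ▸ G.ln_le_pl) hln
  let F' : ProjFlag K V :=
    ⟨_, F.ln, F.pl, hinf, F.finrank_ln, F.finrank_pl, inf_le_left, F.ln_le_pl⟩
  let G' : ProjFlag K V :=
    ⟨_, G.ln, G.pl, hinf, G.finrank_ln, G.finrank_pl, inf_le_right, G.ln_le_pl⟩
  calc f F = f F' := h₀ _ _ (adjAt_zero.2 ⟨rfl, rfl⟩)
    _ = f G' := h₁ _ _ (adjAt_one.2 ⟨rfl, hFG⟩)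
    _ = f G := h₀ _ _ (adjAt_zero.2 ⟨rfl, rfl⟩)

theorem eq_of_comp_eq (j : Fin 3) (h : ∀ i ≠ j, ∀ F G, AdjAt i F G → f F = f G)
    (hFG : F.comp j = G.comp j) : f F = f G := by
  match j with
  | 0 => exact eq_of_pt_eq (h 1 (by decide)) (h 2 (by decide)) hFG
  | 1 => exact eq_of_ln_eq (h 0 (by decide)) (h 2 (by decide)) hFG
  | 2 => exact eq_of_pl_eq (h 0 (by decide)) (h 1 (by decide)) hFG

end Connectivity

section Existence

variable [Fact (finrank K V = 4)]

theorem finiteDimensional_of_fact_finrank_eq_four : FiniteDimensional K V :=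
  .of_fact_finrank_eq_succ 3

attribute [local instance] finiteDimensional_of_fact_finrank_eq_four

theorem lt_top_of_finrank_lt_four {S : Submodule K V} (hS : finrank K S < 4) : S < ⊤ :=
  Submodule.lt_of_le_of_finrank_lt_finrank le_top (by
    rwa [finrank_top, Fact.out (p := finrank K V = 4)])

theorem exists_adjAt_ne (i : Fin 3) (F : ProjFlag K V) : ∃ G, F ≠ G ∧ AdjAt i F G := by
  match i with
  | 0 =>
    obtain ⟨P, hP, -, hPln, hPpt⟩ := exists_finrank_eq_succ_not_le bot_le F.pt_lt_ln
    exact ⟨⟨P, F.ln, F.pl, by simpa using hP, F.finrank_ln, F.finrank_pl, hPln, F.ln_le_pl⟩,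
      fun h => hPpt (congrArg pt h).ge, adjAt_zero.2 ⟨rfl, rfl⟩⟩
  | 1 =>
    obtain ⟨g, hg, hptg, hgpl, hgln⟩ := exists_finrank_eq_succ_not_le F.pt_le_ln F.ln_lt_pl
    exact ⟨⟨F.pt, g, F.pl, F.finrank_pt, by rw [hg, F.finrank_pt], F.finrank_pl, hptg, hgpl⟩,
      fun h => hgln (congrArg ln h).ge, adjAt_one.2 ⟨rfl, rfl⟩⟩
  | 2 =>
    obtain ⟨ε, hε, hlnε, -, hεpl⟩ := exists_finrank_eq_succ_not_le F.ln_le_pl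
      (lt_top_of_finrank_lt_four (F.finrank_pl.trans_lt (by norm_num)))
    exact ⟨⟨F.pt, F.ln, ε, F.finrank_pt, F.finrank_ln, by rw [hε, F.finrank_ln], F.pt_le_ln,
      hlnε⟩, fun h => hεpl (congrArg pl h).ge, adjAt_two.2 ⟨rfl, rfl⟩⟩

theorem exists_pt_eq_ln_eq {P g : Submodule K V} (hP : finrank K P = 1) (hg : finrank K g = 2)
    (hPg : P ≤ g) : ∃ F : ProjFlag K V, F.pt = P ∧ F.ln = g := by
  obtain ⟨ε, hε, hgε, -, -⟩ := exists_finrank_eq_succ_not_le le_rfl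
    (lt_top_of_finrank_lt_four (hg.trans_lt (by norm_num)))
  exact ⟨⟨P, g, ε, hP, hg, by rw [hε, hg], hPg, hgε⟩, rfl, rfl⟩

theorem exists_pt_eq {P : Submodule K V} (hP : finrank K P = 1) :
    ∃ F : ProjFlag K V, F.pt = P := by
  obtain ⟨g, hg, hPg, -, -⟩ := exists_finrank_eq_succ_not_le le_rfl
    (lt_top_of_finrank_lt_four (hP.trans_lt (by norm_num)))
  obtain ⟨F, hF, -⟩ := exists_pt_eq_ln_eq hP (by rw [hg, hP]) hPg
  exact ⟨F, hF⟩

protected theorem nonempty : Nonempty (ProjFlag K V) := by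
  have : Nontrivial V :=
    Module.nontrivial_of_finrank_pos (R := K) (by rw [Fact.out (p := finrank K V = 4)]; norm_num)
  obtain ⟨x, hx⟩ := exists_ne (0 : V)
  exact ⟨(exists_pt_eq (finrank_span_singleton (K := K) hx)).choose⟩

theorem eq_of_forall_adj {α : Sort*} {f : ProjFlag K V → α}
    (h : ∀ F G, Adj F G → f F = f G) (F G : ProjFlag K V) :
    f F = f G := by
  have hcomp (j : Fin 3) {F G : ProjFlag K V} : F.comp j = G.comp j → f F = f G :=
    eq_of_comp_eq j fun i _ F G hFG => h F G hFG.adj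
  by_cases hpt : F.pt = G.pt
  · exact hcomp 0 hpt
  have hsup : finrank K (F.pt ⊔ G.pt : Submodule K V) = 2 :=
    finrank_sup_of_finrank_eq_succ (finrank_bot K V) F.finrank_pt G.finrank_pt bot_le bot_le hpt
  obtain ⟨F', hF'pt, hF'ln⟩ := exists_pt_eq_ln_eq F.finrank_pt hsup le_sup_left
  obtain ⟨G', hG'pt, hG'ln⟩ := exists_pt_eq_ln_eq G.finrank_pt hsup le_sup_right
  calc f F = f F' := hcomp 0 hF'pt.symm
    _ = f G' := hcomp 1 (hF'ln.trans hG'ln.symm)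
    _ = f G := hcomp 0 hG'pt

end Existence

end ProjFlag

end Flags

section FlagAutomorphisms

open Module ProjFlag

variable {K V : Type*} [DivisionRing K] [AddCommGroup V] [Module K V]
  {e : ProjFlag K V ≃ ProjFlag K V}

/-- Near the flag `F`, the map `e` takes `i`-adjacency to `π i`-adjacency. -/
def HasTypeAt (e : ProjFlag K V ≃ ProjFlag K V) (π : Equiv.Perm (Fin 3)) (F : ProjFlag K V) :
    Prop :=
  ∀ i G, AdjAt i F G → AdjAt (π i) (e F) (e G)

theorem HasTypeAt.apply_eq_apply {π π' : Equiv.Perm (Fin 3)} {F G : ProjFlag K V} {i : Fin 3}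
    (hF : HasTypeAt e π F) (hG : HasTypeAt e π' G) (h : AdjAt i F G) (hFG : F ≠ G) :
    π i = π' i := by
  by_contra hi
  exact hFG (e.injective ((hF i G h).eq_of_adjAt (hG i F h.symm).symm hi))

theorem HasTypeAt.symm {π : Equiv.Perm (Fin 3)} (he : ∀ F G, Adj F G ↔ Adj (e F) (e G))
    (hπ : ∀ F, HasTypeAt e π F) (F : ProjFlag K V) : HasTypeAt e.symm π.symm F := by
  intro i G hFG
  obtain ⟨k, hk⟩ := (he (e.symm F) (e.symm G)).2 (by simpa using hFG.adj)
  obtain rfl | hne := eq_or_ne F G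
  · exact .refl _ _
  have hk' : AdjAt (π k) F G := by simpa using hπ _ k _ hk
  have hik : i = π k := by
    by_contra hik
    exact hne (hFG.eq_of_adjAt hk' hik)
  rwa [hik, π.symm_apply_apply]

theorem eq_of_hexagon {F F' X Y G' G : ProjFlag K V} {a b c : Fin 3} (ha : a ≠ 1) (hc : c ≠ 1)
    (hFF' : AdjAt a F F') (hF'X : AdjAt 1 F' X) (hXY : AdjAt b X Y) (hYG' : AdjAt 1 Y G')
    (hG'G : AdjAt c G' G) (hGF : AdjAt 1 G F) (hF' : F ≠ F') (hG' : G' ≠ G) : a = c := by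
  by_contra hac
  obtain rfl | hab := eq_or_ne a b
  · refine hG' (hG'G.eq_of_comp_eq ?_)
    rw [hGF c hc, hFF' c (Ne.symm hac), hF'X c hc, hXY c (Ne.symm hac), hYG' c hc]
  · refine hF' (hFF'.eq_of_comp_eq ?_)
    rw [hF'X a ha, hXY a hab, hYG' a ha, hG'G a hac, hGF a ha]

section

variable [Fact (finrank K V = 4)]

attribute [local instance] finiteDimensional_of_fact_finrank_eq_four

theorem exists_forall_adjAt_map (he : ∀ F G, Adj F G ↔ Adj (e F) (e G)) (F : ProjFlag K V)
    (i : Fin 3) : ∃ k, ∀ G, AdjAt i F G → AdjAt k (e F) (e G) := by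
  obtain ⟨G₀, hne, hG₀⟩ := exists_adjAt_ne i F
  obtain ⟨k, hk⟩ := (he F G₀).1 hG₀.adj
  refine ⟨k, fun G hG => ?_⟩
  obtain rfl | hFG := eq_or_ne F G
  · exact .refl k _
  obtain ⟨l, hl⟩ := (he F G).1 hG.adj
  obtain rfl : k = l := by
    by_contra hkl
    exact hk.not_adj hl hkl (e.injective.ne hne) (e.injective.ne hFG)
      ((he G₀ G).1 (hG₀.symm.trans hG).adj)
  exact hl

theorem exists_hasTypeAt (he : ∀ F G, Adj F G ↔ Adj (e F) (e G)) (F : ProjFlag K V) :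
    ∃ π, HasTypeAt e π F := by
  choose π hπ using exists_forall_adjAt_map he F
  have hinj : Function.Injective π := by
    intro i j hij
    obtain ⟨G, hFG, hG⟩ := exists_adjAt_ne i F
    obtain ⟨H, hFH, hH⟩ := exists_adjAt_ne j F
    by_contra hne
    refine hG.not_adj hH hne hFG hFH ((he G H).2 ?_)
    exact ((hπ i G hG).symm.trans (hij ▸ hπ j H hH)).adj
  exact ⟨.ofBijective π (Finite.injective_iff_bijective.1 hinj), hπ⟩

theorem HasTypeAt.apply_one (he : ∀ F G, Adj F G ↔ Adj (e F) (e G)) {π : Equiv.Perm (Fin 3)}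
    {F : ProjFlag K V} (hπ : HasTypeAt e π F) : π 1 = 1 := by
  obtain ⟨G, hFG, h₀⟩ := exists_adjAt_ne 0 F
  obtain ⟨X, hFX, h₂⟩ := exists_adjAt_ne 2 F
  obtain ⟨H, hGH, hHX⟩ := exists_adjAt_two_adjAt_zero h₀ h₂
  have hGX : ¬ Adj G X := h₀.not_adj h₂ (by decide) hFG hFX
  have hFH : ¬ Adj F H := by
    refine h₀.symm.not_adj hGH (by decide) hFG.symm ?_
    rintro rfl
    exact hGX hHX.adj
  rw [he] at hGX hFH
  obtain ⟨b, hb⟩ := (he G H).1 hGH.adj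
  obtain ⟨c, hc⟩ := (he H X).1 hHX.adj
  have h0 : π 0 ≠ 1 := (hπ 0 G h₀).ne_one_of_square hb hc (hπ 2 X h₂).symm hFH hGX
  have h2 : π 2 ≠ 1 := (hπ 2 X h₂).ne_one_of_square hc.symm hb.symm (hπ 0 G h₀).symm hFH
    fun h => hGX h.symm
  revert h0 h2
  clear hπ
  decide +revert

theorem exists_hexagon {F G : ProjFlag K V} (hFG : AdjAt 1 F G) (hne : F ≠ G) :
    ∃ F' X Y G', AdjAt 0 F F' ∧ AdjAt 1 F' X ∧ AdjAt 0 X Y ∧ AdjAt 1 Y G' ∧ AdjAt 0 G' G ∧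
      F ≠ F' ∧ G' ≠ G := by
  obtain ⟨hpt, hpl⟩ := adjAt_one.1 hFG
  obtain ⟨F', hF', hFF'⟩ := exists_adjAt_ne 0 F
  obtain ⟨G', hG', hGG'⟩ := exists_adjAt_ne 0 G
  obtain ⟨-, hF'pl⟩ := adjAt_zero.1 hFF'
  obtain ⟨-, hG'pl⟩ := adjAt_zero.1 hGG'
  have hptne : F'.pt ≠ G'.pt := by
    intro h
    refine hne (hFG.eq_of_comp_eq ?_)
    rw [comp_one, comp_one, ← hFF'.pt_sup_pt hF', ← hGG'.pt_sup_pt hG', hpt, h]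
  have hsup : finrank K (F'.pt ⊔ G'.pt : Submodule K V) = 2 :=
    finrank_sup_of_finrank_eq_succ (finrank_bot K V) F'.finrank_pt G'.finrank_pt bot_le bot_le
      hptne
  have hle : F'.pt ⊔ G'.pt ≤ F.pl :=
    sup_le (hF'pl ▸ F'.pt_le_ln.trans F'.ln_le_pl)
      ((hpl.trans hG'pl) ▸ G'.pt_le_ln.trans G'.ln_le_pl)
  refine ⟨F', ⟨F'.pt, _, F.pl, F'.finrank_pt, hsup, F.finrank_pl, le_sup_left, hle⟩,
    ⟨G'.pt, _, F.pl, G'.finrank_pt, hsup, F.finrank_pl, le_sup_right, hle⟩, G', hFF',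
    adjAt_one.2 ⟨rfl, hF'pl.symm⟩, adjAt_zero.2 ⟨rfl, rfl⟩, adjAt_one.2 ⟨rfl, hpl.trans hG'pl⟩,
    hGG'.symm, hF', hG'.symm⟩

theorem HasTypeAt.apply_zero_of_adjAt_one (he : ∀ F G, Adj F G ↔ Adj (e F) (e G))
    {π π' : Equiv.Perm (Fin 3)} {F G : ProjFlag K V} (hF : HasTypeAt e π F)
    (hG : HasTypeAt e π' G) (hFG : AdjAt 1 F G) (hne : F ≠ G) : π 0 = π' 0 := by
  have map_one {A B : ProjFlag K V} (hAB : AdjAt 1 A B) : AdjAt 1 (e A) (e B) := by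
    obtain ⟨σ, hσ⟩ := exists_hasTypeAt he A
    simpa [hσ.apply_one he] using hσ 1 B hAB
  have ne_one {σ : Equiv.Perm (Fin 3)} {A : ProjFlag K V} (hσ : HasTypeAt e σ A) : σ 0 ≠ 1 := by
    rw [← hσ.apply_one he]
    exact σ.injective.ne (by decide)
  obtain ⟨F', X, Y, G', hFF', hF'X, hXY, hYG', hG'G, hF', hG'⟩ := exists_hexagon hFG hne
  obtain ⟨σ, hσ⟩ := exists_hasTypeAt he X
  exact eq_of_hexagon (ne_one hF) (ne_one hG) (hF 0 F' hFF') (map_one hF'X) (hσ 0 Y hXY)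
    (map_one hYG') (hG 0 G' hG'G.symm).symm (map_one hFG.symm) (e.injective.ne hF')
    (e.injective.ne hG')

theorem HasTypeAt.eq_of_adj (he : ∀ F G, Adj F G ↔ Adj (e F) (e G)) {π π' : Equiv.Perm (Fin 3)}
    {F G : ProjFlag K V} (hF : HasTypeAt e π F) (hG : HasTypeAt e π' G) (hFG : Adj F G)
    (hne : F ≠ G) : π = π' := by
  obtain ⟨i, hi⟩ := hFG
  have h1 : π 1 = π' 1 := (hF.apply_one he).trans (hG.apply_one he).symm
  have : π 0 = π' 0 ∨ π 2 = π' 2 := by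
    match i with
    | 0 => exact .inl (hF.apply_eq_apply hG hi hne)
    | 1 => exact .inl (hF.apply_zero_of_adjAt_one he hG hi hne)
    | 2 => exact .inr (hF.apply_eq_apply hG hi hne)
  revert this h1
  clear hF hG
  decide +revert

theorem exists_forall_hasTypeAt (he : ∀ F G, Adj F G ↔ Adj (e F) (e G)) :
    ∃ π : Equiv.Perm (Fin 3), (π = 1 ∨ π = Fin.revPerm) ∧ ∀ F, HasTypeAt e π F := by
  choose π hπ using exists_hasTypeAt he
  have hconst := eq_of_forall_adj (f := π) fun F G hFG => by
    obtain rfl | hne := eq_or_ne F G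
    · rfl
    · exact (hπ F).eq_of_adj he (hπ G) hFG hne
  obtain ⟨F₀⟩ := ProjFlag.nonempty (K := K) (V := V)
  refine ⟨π F₀, ?_, fun F => hconst F F₀ ▸ hπ F⟩
  have h1 := (hπ F₀).apply_one he
  generalize π F₀ = σ at h1
  revert h1
  decide +revert

theorem comp_map_eq {π : Equiv.Perm (Fin 3)} (hπ : ∀ F, HasTypeAt e π F) {j : Fin 3}
    {F G : ProjFlag K V} (hFG : F.comp j = G.comp j) : (e F).comp (π j) = (e G).comp (π j) :=
  eq_of_comp_eq (f := fun F => (e F).comp (π j)) j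
    (fun i hij F G h => hπ F i G h (π j) (π.injective.ne hij.symm)) hFG

theorem exists_perm_comp_eq_iff (he : ∀ F G, Adj F G ↔ Adj (e F) (e G)) :
    ∃ π : Equiv.Perm (Fin 3), (π = 1 ∨ π = Fin.revPerm) ∧
      ∀ j F G, F.comp j = G.comp j ↔ (e F).comp (π j) = (e G).comp (π j) := by
  obtain ⟨π, h, hπ⟩ := exists_forall_hasTypeAt he
  refine ⟨π, h, fun j F G => ⟨comp_map_eq hπ, fun hFG => ?_⟩⟩
  simpa using comp_map_eq (HasTypeAt.symm he hπ) hFG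

end

end FlagAutomorphisms

section TypePreserving

open scoped LinearAlgebra.Projectivization

open Module ProjFlag Projectivization

theorem exists_equiv_apply_eq_of_surjective {α β : Type*} {f : α → β}
    (hf : Function.Surjective f) (e : α ≃ α) (he : ∀ a b, f a = f b ↔ f (e a) = f (e b)) :
    ∃ σ : β ≃ β, ∀ a, σ (f a) = f (e a) := by
  let q := Setoid.quotientKerEquivOfSurjective f hf
  refine ⟨q.symm.trans ((Quotient.congr e he).trans q), fun a => ?_⟩
  have ha : q.symm (f a) = Quotient.mk _ a := q.symm_apply_eq.2 rfl
  simp only [Equiv.trans_apply, ha]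
  rfl

variable {K V : Type*} [Field K] [AddCommGroup V] [Module K V]

/-- A bijection of the set of flags is type preserving if it is induced by separate bijections of
the sets of points, of lines and of planes. -/
def IsTypePreserving (e : ProjFlag K V ≃ ProjFlag K V) : Prop :=
  ∀ j F G, F.comp j = G.comp j ↔ (e F).comp j = (e G).comp j

/-- The point of a flag as a point of projective space. -/
noncomputable def ProjFlag.projPt (F : ProjFlag K V) : ℙ K V :=
  Projectivization.mk'' F.pt F.finrank_pt

@[simp]
theorem ProjFlag.submodule_projPt (F : ProjFlag K V) : F.projPt.submodule = F.pt :=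
  submodule_mk'' _ _

theorem ProjFlag.projPt_eq_iff {F G : ProjFlag K V} : F.projPt = G.projPt ↔ F.pt = G.pt := by
  rw [← (submodule_injective (K := K) (V := V)).eq_iff, submodule_projPt, submodule_projPt]

namespace IsTypePreserving

variable {e : ProjFlag K V ≃ ProjFlag K V}

theorem symm (he : IsTypePreserving e) : IsTypePreserving e.symm := fun j F G => by
  rw [he j (e.symm F), e.apply_symm_apply, e.apply_symm_apply]

theorem adjAt (he : IsTypePreserving e) {i : Fin 3} {F G : ProjFlag K V} (h : AdjAt i F G) :
    AdjAt i (e F) (e G) :=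
  fun j hj => (he j F G).1 (h j hj)

variable [Fact (finrank K V = 4)]

attribute [local instance] finiteDimensional_of_fact_finrank_eq_four

attribute [local instance] RingHomInvPair.of_ringEquiv RingHomInvPair.of_ringEquiv_symm

theorem projPt_surjective : Function.Surjective (ProjFlag.projPt (K := K) (V := V)) := by
  intro P
  obtain ⟨F, hF⟩ := exists_pt_eq P.finrank_submodule
  exact ⟨F, submodule_injective (by rw [submodule_projPt, hF])⟩

theorem pt_le_sup (he : IsTypePreserving e) {F G H : ProjFlag K V} (h : F.pt ≤ G.pt ⊔ H.pt) :
    (e F).pt ≤ (e G).pt ⊔ (e H).pt := by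
  by_cases hGH : G.pt = H.pt
  · rw [hGH, sup_idem] at h
    have hFH : F.pt = H.pt :=
      Submodule.eq_of_le_of_finrank_eq h (F.finrank_pt.trans H.finrank_pt.symm)
    exact ((he 0 F H).1 hFH).le.trans le_sup_right
  have hg : finrank K (G.pt ⊔ H.pt : Submodule K V) = 2 :=
    finrank_sup_of_finrank_eq_succ (finrank_bot K V) G.finrank_pt H.finrank_pt bot_le bot_le hGH
  obtain ⟨X, hXpt, hXln⟩ := exists_pt_eq_ln_eq G.finrank_pt hg le_sup_left
  have hF : F.pt ≤ X.ln := h.trans_eq hXln.symm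
  have hH : H.pt ≤ X.ln := le_sup_right.trans_eq hXln.symm
  let onX (P : ProjFlag K V) (hP : P.pt ≤ X.ln) : ProjFlag K V :=
    ⟨P.pt, X.ln, X.pl, P.finrank_pt, X.finrank_ln, X.finrank_pl, hP, X.ln_le_pl⟩
  have hadj (P : ProjFlag K V) (hP : P.pt ≤ X.ln) : AdjAt 0 (e X) (e (onX P hP)) :=
    he.adjAt (adjAt_zero.2 ⟨rfl, rfl⟩)
  have hpt (P : ProjFlag K V) (hP : P.pt ≤ X.ln) : (e (onX P hP)).pt = (e P).pt :=
    (he 0 (onX P hP) P).1 rfl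
  have hne : e X ≠ e (onX H hH) := by
    intro heq
    have hX := congrArg pt (e.injective heq)
    exact hGH (hXpt.symm.trans hX)
  calc (e F).pt = (e (onX F hF)).pt := (hpt F hF).symm
    _ ≤ (e X).ln := (e (onX F hF)).pt_le_ln.trans_eq (adjAt_zero.1 (hadj F hF)).1.symm
    _ = (e X).pt ⊔ (e (onX H hH)).pt := ((hadj H hH).pt_sup_pt hne).symm
    _ = (e G).pt ⊔ (e H).pt := by rw [hpt H hH, show (e X).pt = (e G).pt from (he 0 X G).1 hXpt]

theorem exists_isCollineation (he : IsTypePreserving e) :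
    ∃ σ : ℙ K V ≃ ℙ K V, IsCollineation σ ∧ ∀ F, σ F.projPt = (e F).projPt := by
  obtain ⟨σ, hσ⟩ := exists_equiv_apply_eq_of_surjective projPt_surjective e fun F G => by
    rw [projPt_eq_iff, projPt_eq_iff]
    exact he 0 F G
  refine ⟨σ, fun P Q R => ?_, hσ⟩
  obtain ⟨F, rfl⟩ := projPt_surjective P
  obtain ⟨G, rfl⟩ := projPt_surjective Q
  obtain ⟨H, rfl⟩ := projPt_surjective R
  simp only [hσ, submodule_projPt]
  exact ⟨fun h => by simpa using he.symm.pt_le_sup h, he.pt_le_sup⟩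

theorem exists_semilinearEquiv (he : IsTypePreserving e) :
    ∃ (ζ : K ≃+* K) (f : V ≃ₛₗ[(ζ : K →+* K)] V), ∀ F j,
      (e F).comp j = (F.comp j).map f.toLinearMap := by
  obtain ⟨σ, hσ, hσe⟩ := he.exists_isCollineation
  obtain ⟨ζ, f, hf⟩ := hσ.exists_semilinearEquiv (by
    rw [← finrank_eq_rank, Fact.out (p := finrank K V = 4)]
    norm_num)
  have hpt (F : ProjFlag K V) : (e F).pt = F.pt.map f.toLinearMap := by
    rw [← submodule_projPt, ← hσe, hf, submodule_projPt]
  have hln (F : ProjFlag K V) : (e F).ln = F.ln.map f.toLinearMap := by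
    obtain ⟨G, hne, hG⟩ := exists_adjAt_ne 0 F
    rw [← hG.pt_sup_pt hne, ← (he.adjAt hG).pt_sup_pt (e.injective.ne hne), hpt, hpt,
      Submodule.map_sup]
  have hpl (F : ProjFlag K V) : (e F).pl = F.pl.map f.toLinearMap := by
    obtain ⟨G, hne, hG⟩ := exists_adjAt_ne 1 F
    rw [← hG.ln_sup_ln hne, ← (he.adjAt hG).ln_sup_ln (e.injective.ne hne), hln, hln,
      Submodule.map_sup]
  exact ⟨ζ, f, fun F j => by fin_cases j <;> [exact hpt F; exact hln F; exact hpl F]⟩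

end IsTypePreserving

end TypePreserving

section PureTensors

open Module Submodule

variable {K A B C : Type*} [Field K] [AddCommGroup A] [Module K A] [AddCommGroup B] [Module K B]
  [AddCommGroup C] [Module K C]

theorem mem_span_singleton_of_mem {x y : A} (hx : x ≠ 0) (h : x ∈ K ∙ y) : y ∈ K ∙ x := by
  simpa using mem_span_insert_exchange (s := ∅) (by simpa using h) (by simpa using hx)

theorem mem_span_singleton_of_mem_of_mem {x y z : A} (hy : y ≠ 0) (hx : x ∈ K ∙ z)
    (hy' : y ∈ K ∙ z) : x ∈ K ∙ y :=
  mem_span_singleton_trans hx (mem_span_singleton_of_mem hy hy')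

theorem exists_dual_eq_zero_eq_one {x y : A} (hx : x ∉ K ∙ y) :
    ∃ φ : Dual K A, φ y = 0 ∧ φ x = 1 := by
  obtain ⟨φ, hφx, hφ⟩ := exists_le_ker_of_notMem hx
  refine ⟨(φ x)⁻¹ • φ, ?_, inv_mul_cancel₀ hφx⟩
  have hφy : φ y = 0 := hφ (mem_span_singleton_self y)
  simp [hφy]

/-- Contraction of the first factor of a tensor product with a linear form. -/
noncomputable def contractFst (φ : Dual K A) : A ⊗[K] B →ₗ[K] B :=
  TensorProduct.lid K B ∘ₗ φ.rTensor B

@[simp]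
theorem contractFst_tmul (φ : Dual K A) (a : A) (b : B) : contractFst φ (a ⊗ₜ b) = φ a • b := by
  simp [contractFst]

theorem tmul_ne_zero_of_ne_zero {a : A} {b : B} (ha : a ≠ 0) (hb : b ≠ 0) : a ⊗ₜ[K] b ≠ 0 := by
  obtain ⟨φ, hφ⟩ := Projective.exists_dual_eq_one K ha
  intro h
  apply hb
  simpa [hφ] using congrArg (contractFst φ) h

theorem right_mem_span_of_tmul_mem_span {a a' : A} {b b' : B} (ha : a ≠ 0)
    (h : a ⊗ₜ[K] b ∈ K ∙ (a' ⊗ₜ[K] b')) : b ∈ K ∙ b' := by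
  obtain ⟨φ, hφ⟩ := Projective.exists_dual_eq_one K ha
  obtain ⟨c, hc⟩ := mem_span_singleton.1 h
  refine mem_span_singleton.2 ⟨c * φ a', ?_⟩
  simpa [hφ, mul_smul] using congrArg (contractFst φ) hc

theorem left_mem_span_of_tmul_mem_span {a a' : A} {b b' : B} (hb : b ≠ 0)
    (h : a ⊗ₜ[K] b ∈ K ∙ (a' ⊗ₜ[K] b')) : a ∈ K ∙ a' := by
  refine right_mem_span_of_tmul_mem_span hb (a' := b') ?_
  obtain ⟨c, hc⟩ := mem_span_singleton.1 h
  exact mem_span_singleton.2 ⟨c, by simpa using congrArg (TensorProduct.comm K A B) hc⟩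

theorem right_mem_span_of_tmul_add_tmul {a a' a'' : A} {b b' b'' : B} (ha : a ∉ K ∙ a')
    (h : a ⊗ₜ[K] b + a' ⊗ₜ[K] b' = a'' ⊗ₜ[K] b'') : b ∈ K ∙ b'' := by
  obtain ⟨φ, hφa', hφa⟩ := exists_dual_eq_zero_eq_one ha
  refine mem_span_singleton.2 ⟨φ a'', ?_⟩
  simpa [hφa, hφa'] using (congrArg (contractFst φ) h).symm

theorem mem_span_or_mem_span_of_tmul_add_tmul {a a' a'' : A} {b b' b'' : B} (ha' : a' ≠ 0)
    (hb' : b' ≠ 0) (h : a ⊗ₜ[K] b + a' ⊗ₜ[K] b' = a'' ⊗ₜ[K] b'') :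
    a ∈ K ∙ a' ∨ b ∈ K ∙ b' := by
  refine or_iff_not_imp_left.2 fun ha => ?_
  have ha'a : a' ∉ K ∙ a := fun h => ha (mem_span_singleton_of_mem ha' h)
  exact mem_span_singleton_of_mem_of_mem hb' (right_mem_span_of_tmul_add_tmul ha h)
    (right_mem_span_of_tmul_add_tmul ha'a ((add_comm _ _).trans h))

theorem mem_span_of_tmul_tmul_add_tmul_tmul {a a' a'' : A} {b b' b'' : B} {c c' c'' : C}
    (ha : a ≠ 0) (hb : b ≠ 0) (hc : c ≠ 0) (ha' : a' ≠ 0) (hb' : b' ≠ 0)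
    (hc' : c' ≠ 0)
    (h : a ⊗ₜ[K] b ⊗ₜ[K] c + a' ⊗ₜ[K] b' ⊗ₜ[K] c' = a'' ⊗ₜ[K] b'' ⊗ₜ[K] c'') :
    (b ∈ K ∙ b' ∧ c ∈ K ∙ c') ∨ (a ∈ K ∙ a' ∧ c ∈ K ∙ c') ∨ (a ∈ K ∙ a' ∧ b ∈ K ∙ b') := by
  by_cases hab : a ⊗ₜ[K] b ∈ K ∙ (a' ⊗ₜ[K] b')
  · exact .inr (.inr ⟨left_mem_span_of_tmul_mem_span hb hab,
      right_mem_span_of_tmul_mem_span ha hab⟩)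
  have hcc' : c ∈ K ∙ c' := (mem_span_or_mem_span_of_tmul_add_tmul
    (tmul_ne_zero_of_ne_zero ha' hb') hc' h).resolve_left hab
  obtain ⟨k, rfl⟩ := mem_span_singleton.1 hcc'
  have hk : k ≠ 0 := (smul_ne_zero_iff.1 hc).1
  obtain ⟨φ, hφ⟩ := Projective.exists_dual_eq_one K hc'
  have hsum : (k • a) ⊗ₜ[K] b + a' ⊗ₜ[K] b' = (φ c'' • a'') ⊗ₜ[K] b'' := by
    simpa [hφ, TensorProduct.smul_tmul'] using
      congrArg (contractFst φ ∘ TensorProduct.comm K (A ⊗[K] B) C) h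
  obtain hka | hbb' := mem_span_or_mem_span_of_tmul_add_tmul ha' hb' hsum
  · exact .inr (.inl ⟨(smul_mem_iff _ hk).1 hka, hcc'⟩)
  · exact .inl ⟨hbb', hcc'⟩

end PureTensors

section Wedge

open Module Submodule

variable {K V : Type*} [Field K] [AddCommGroup V] [Module K V]

theorem wedge2_self (q : V) : wedge2 K V q q = 0 :=
  (exteriorPower.ιMulti K 2).map_eq_zero_of_eq ![q, q] (i := 0) (j := 1) rfl (by decide)

/-- The wedge `wedge2` as a bilinear map. -/
noncomputable def wedgeBilin : V →ₗ[K] V →ₗ[K] ⋀[K]^2 V :=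
  .mk₂ K (wedge2 K V)
    (fun q q' r =>
      (exteriorPower.ιMulti K 2).map_vecCons_add ![r] q q')
    (fun c q r =>
      (exteriorPower.ιMulti K 2).map_vecCons_smul ![r] c q)
    (fun q r r' =>
      ((exteriorPower.ιMulti K 2).curryLeft q).map_vecCons_add ![] r r')
    (fun c q r =>
      ((exteriorPower.ιMulti K 2).curryLeft q).map_vecCons_smul ![] c r)

theorem wedgeBilin_apply (q r : V) : wedgeBilin q r = wedge2 K V q r := rfl

theorem wedgeBilin_isAlt : (wedgeBilin (K := K) (V := V)).IsAlt := wedge2_self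

theorem neg_wedge2 (q r : V) : -wedge2 K V q r = wedge2 K V r q := wedgeBilin_isAlt.neg q r

section Lift

variable {K₂ M : Type*} [Field K₂] [AddCommGroup M] [Module K₂ M] {σ : K →+* K₂}

/-- The semilinear map on `⋀[K]^2 V` determined by an alternating semilinear map on pairs. -/
noncomputable def wedgeLift (B : V →ₛₗ[σ] V →ₛₗ[σ] M) (hB : B.IsAlt) : ⋀[K]^2 V →ₛₗ[σ] M :=
  letI : Module K M := .compHom M σ
  let f : V [⋀^Fin 2]→ₗ[K] M := .mk
    { toFun v := B (v 0) (v 1)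
      map_update_add' v i x y := by fin_cases i <;> simp
      map_update_smul' v i c x := by fin_cases i <;> simp <;> rfl }
    fun v i j hv hij => by
      have h01 : v 0 = v 1 := by fin_cases i <;> fin_cases j <;> simp_all
      simp [h01, hB.self_eq_zero]
  { exteriorPower.alternatingMapLinearEquiv f with
    map_smul' := (exteriorPower.alternatingMapLinearEquiv f).map_smul }

@[simp]
theorem wedgeLift_wedge2 (B : V →ₛₗ[σ] V →ₛₗ[σ] M) (hB : B.IsAlt) (q r : V) :
    wedgeLift B hB (wedge2 K V q r) = B q r :=
  letI : Module K M := .compHom M σ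
  exteriorPower.alternatingMapLinearEquiv_apply_ιMulti _ ![q, r]

theorem semilinearMap_ext_wedge2 {L L' : ⋀[K]^2 V →ₛₗ[σ] M}
    (h : ∀ q r, L (wedge2 K V q r) = L' (wedge2 K V q r)) : L = L' := by
  refine LinearMap.ext_on (exteriorPower.ιMulti_span K 2 V) ?_
  rintro _ ⟨v, rfl⟩
  have hv : v = ![v 0, v 1] := by ext i; fin_cases i <;> rfl
  rw [hv]
  exact h _ _

end Lift

/-- Contraction of a bivector with a linear form. -/
noncomputable def contractWedge (φ : Dual K V) : ⋀[K]^2 V →ₗ[K] V :=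
  wedgeLift (LinearMap.lsmul K V ∘ₗ φ - (LinearMap.lsmul K V ∘ₗ φ).flip) fun q => by simp

theorem contractWedge_wedge2 (φ : Dual K V) (q r : V) :
    contractWedge φ (wedge2 K V q r) = φ q • r - φ r • q :=
  wedgeLift_wedge2 _ _ q r

theorem notMem_span_singleton_of_wedge2_ne_zero {q r : V} (h : wedge2 K V q r ≠ 0) :
    r ∉ K ∙ q := by
  intro hr
  obtain ⟨c, rfl⟩ := mem_span_singleton.1 hr
  exact h (by rw [← wedgeBilin_apply, map_smul, wedgeBilin_isAlt, smul_zero])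

theorem wedge2_ne_zero_iff {q r : V} : wedge2 K V q r ≠ 0 ↔ LinearIndependent K ![q, r] := by
  refine ⟨fun h => ?_, fun h h0 => ?_⟩
  · contrapose! h
    exact (exteriorPower.ιMulti K 2).map_linearDependent _ h
  · have hq : q ≠ 0 := h.ne_zero 0
    have hr : r ∉ K ∙ q := by simpa [mem_span_singleton] using (LinearIndependent.pair_iff' hq).1 h
    obtain ⟨φ, hφq, hφr⟩ := exists_dual_eq_zero_eq_one hr
    apply hq
    simpa [contractWedge_wedge2, hφq, hφr] using congrArg (contractWedge φ) h0

theorem wedge2_ne_zero_iff_finrank {q r : V} :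
    wedge2 K V q r ≠ 0 ↔ finrank K (span K {q, r}) = 2 := by
  rw [wedge2_ne_zero_iff, linearIndependent_iff_card_eq_finrank_span, Set.finrank,
    Matrix.range_cons_cons_empty, Fintype.card_fin, eq_comm]

theorem mem_span_pair_of_wedge2_mem_span {q r q' r' : V} (h0 : wedge2 K V q' r' ≠ 0)
    (h : wedge2 K V q' r' ∈ K ∙ wedge2 K V q r) : q' ∈ span K {q, r} := by
  obtain ⟨φ, hφq', hφr'⟩ :=
    exists_dual_eq_zero_eq_one (notMem_span_singleton_of_wedge2_ne_zero h0)
  obtain ⟨c, hc⟩ := mem_span_singleton.1 h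
  have hq' : c • (φ q • r - φ r • q) = -q' := by
    simpa [hφq', hφr', contractWedge_wedge2] using congrArg (contractWedge φ) hc
  rw [← neg_mem_iff, ← hq']
  exact smul_mem _ _ (sub_mem (smul_mem _ _ (mem_span_of_mem (by simp)))
    (smul_mem _ _ (mem_span_of_mem (by simp))))

theorem wedge2_mem_span {q r q' r' : V} (hq' : q' ∈ span K {q, r}) (hr' : r' ∈ span K {q, r}) :
    wedge2 K V q' r' ∈ K ∙ wedge2 K V q r := by
  obtain ⟨a, b, rfl⟩ := mem_span_pair.1 hq'
  obtain ⟨c, d, rfl⟩ := mem_span_pair.1 hr'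
  refine mem_span_singleton.2 ⟨a * d - b * c, ?_⟩
  simp only [← wedgeBilin_apply, map_add, map_smul, LinearMap.add_apply, LinearMap.smul_apply,
    wedgeBilin_isAlt.self_eq_zero, ← wedgeBilin_isAlt.neg q r]
  module

theorem span_pair_eq_of_wedge2_mem_span {q r q' r' : V} (h0 : wedge2 K V q' r' ≠ 0)
    (h : wedge2 K V q' r' ∈ K ∙ wedge2 K V q r) : span K {q', r'} = span K {q, r} := by
  have h' : wedge2 K V q r ≠ 0 := by
    intro h'
    rw [h', span_zero_singleton, mem_bot] at h
    exact h0 h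
  have hle : span K {q', r'} ≤ span K {q, r} := by
    rw [span_le, Set.pair_subset_iff]
    refine ⟨mem_span_pair_of_wedge2_mem_span h0 h,
      mem_span_pair_of_wedge2_mem_span (r' := q') ?_ ?_⟩
    · rwa [← neg_wedge2, neg_ne_zero]
    · rwa [← neg_wedge2 q' r', neg_mem_iff]
  have := FiniteDimensional.span_of_finite K (Set.toFinite {q, r})
  exact eq_of_le_of_finrank_eq hle (by
    rw [wedge2_ne_zero_iff_finrank.1 h0, wedge2_ne_zero_iff_finrank.1 h'])

theorem exists_semilinearMap_wedge2 {K₂ V₂ : Type*} [Field K₂] [AddCommGroup V₂] [Module K₂ V₂]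
    {σ : K →+* K₂} (f : V →ₛₗ[σ] V₂) :
    ∃ L : ⋀[K]^2 V →ₛₗ[σ] ⋀[K₂]^2 V₂, ∀ q r, L (wedge2 K V q r) = wedge2 K₂ V₂ (f q) (f r) :=
  let B : V →ₛₗ[σ] V →ₛₗ[σ] ⋀[K₂]^2 V₂ :=
    .mk₂'ₛₗ σ σ (fun q r => wedgeBilin (f q) (f r)) (by simp) (by simp) (by simp) (by simp)
  ⟨wedgeLift B fun q => wedge2_self (f q), fun q r => wedgeLift_wedge2 _ _ q r⟩

end Wedge

section FlagVectors

open Module Submodule ProjFlag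

variable {K V : Type*} [Field K] [AddCommGroup V] [Module K V]

theorem span_singleton_eq_of_mem {A : Type*} [AddCommGroup A] [Module K A] {x y : A} (hx : x ≠ 0)
    (h : x ∈ K ∙ y) : K ∙ x = K ∙ y := by
  obtain ⟨c, rfl⟩ := mem_span_singleton.1 h
  exact span_singleton_smul_eq (IsUnit.mk0 c (smul_ne_zero_iff.1 hx).1) y

theorem exists_span_singleton_eq_of_finrank_eq_one {A : Type*} [AddCommGroup A] [Module K A]
    {S : Submodule K A} (hS : finrank K S = 1) : ∃ x, K ∙ x = S := by
  obtain ⟨x, -, hx⟩ := finrank_eq_one_iff'.1 hS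
  refine ⟨x, le_antisymm (by simp) fun y hy => ?_⟩
  obtain ⟨c, hc⟩ := hx ⟨y, hy⟩
  exact mem_span_singleton.2 ⟨c, congrArg Subtype.val hc⟩

theorem mem_span_of_ker_le_ker {e e' : Dual K V} (h : LinearMap.ker e' ≤ LinearMap.ker e) :
    e ∈ K ∙ e' := by
  simpa using mem_span_of_iInf_ker_le_ker (L := fun _ : Unit => e') (by simpa using h)

theorem ker_eq_of_mem_span {e e' : Dual K V} (he : e ≠ 0) (h : e ∈ K ∙ e') :
    LinearMap.ker e = LinearMap.ker e' := by
  obtain ⟨c, rfl⟩ := mem_span_singleton.1 h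
  exact LinearMap.ker_smul _ _ (smul_ne_zero_iff.1 he).1

theorem tmul_tmul_mem_span {A B C : Type*} [AddCommGroup A] [Module K A] [AddCommGroup B]
    [Module K B] [AddCommGroup C] [Module K C] {a a' : A} {b b' : B} {c c' : C}
    (ha : a ∈ K ∙ a') (hb : b ∈ K ∙ b') (hc : c ∈ K ∙ c') :
    a ⊗ₜ[K] b ⊗ₜ[K] c ∈ K ∙ (a' ⊗ₜ[K] b' ⊗ₜ[K] c') := by
  obtain ⟨x, rfl⟩ := mem_span_singleton.1 ha
  obtain ⟨y, rfl⟩ := mem_span_singleton.1 hb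
  obtain ⟨z, rfl⟩ := mem_span_singleton.1 hc
  exact mem_span_singleton.2 ⟨z * (x * y), by
    simp only [TensorProduct.tmul_smul, ← TensorProduct.smul_tmul', smul_smul, mul_comm]⟩

/-- A vector spanning the point `φ(Φ)` of the flag variety. -/
def IsFlagVector (Φ : ProjFlag K V) (u : FlagTensor K V) : Prop :=
  ∃ (p q r : V) (e : Dual K V), K ∙ p = Φ.pt ∧ span K {q, r} = Φ.ln ∧ LinearMap.ker e = Φ.pl ∧
    p ⊗ₜ[K] wedge2 K V q r ⊗ₜ[K] e = u

variable {Φ Ψ : ProjFlag K V} {p q r : V} {e : Dual K V} {u v : FlagTensor K V}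

theorem isFlagRep_iff {x : Submodule K (FlagTensor K V)} :
    IsFlagRep K V Φ x ↔ ∃ u, IsFlagVector Φ u ∧ x = K ∙ u := by
  constructor
  · rintro ⟨p, q, r, e, hp, hqr, he, hx⟩
    exact ⟨_, ⟨p, q, r, e, hp, hqr, he, rfl⟩, hx⟩
  · rintro ⟨_, ⟨p, q, r, e, hp, hqr, he, rfl⟩, hx⟩
    exact ⟨p, q, r, e, hp, hqr, he, hx⟩

theorem ne_zero_of_span_eq_pt (h : K ∙ p = Φ.pt) : p ≠ 0 := by
  rintro rfl
  have := Φ.finrank_pt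
  rw [← h, span_zero_singleton, finrank_bot] at this
  exact zero_ne_one this

theorem wedge2_ne_zero_of_span_eq_ln (h : span K {q, r} = Φ.ln) : wedge2 K V q r ≠ 0 := by
  rw [wedge2_ne_zero_iff_finrank, h, Φ.finrank_ln]

theorem pt_eq_of_mem_span {p' : V} (hp : K ∙ p = Φ.pt) (hp' : K ∙ p' = Ψ.pt) (h : p ∈ K ∙ p') :
    Φ.pt = Ψ.pt :=
  hp.symm.trans ((span_singleton_eq_of_mem (ne_zero_of_span_eq_pt hp) h).trans hp')

theorem ln_eq_of_wedge2_mem_span {q' r' : V} (hqr : span K {q, r} = Φ.ln)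
    (hqr' : span K {q', r'} = Ψ.ln) (h : wedge2 K V q r ∈ K ∙ wedge2 K V q' r') : Φ.ln = Ψ.ln :=
  hqr.symm.trans ((span_pair_eq_of_wedge2_mem_span (wedge2_ne_zero_of_span_eq_ln hqr) h).trans hqr')

theorem IsFlagVector.smul (h : IsFlagVector Φ u) {c : K} (hc : c ≠ 0) :
    IsFlagVector Φ (c • u) := by
  obtain ⟨p, q, r, e, hp, hqr, he, rfl⟩ := h
  exact ⟨c • p, q, r, e, (span_singleton_smul_eq (IsUnit.mk0 c hc) p).trans hp, hqr, he, rfl⟩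

theorem IsFlagVector.mem_span (hu : IsFlagVector Φ u) (hv : IsFlagVector Φ v) : u ∈ K ∙ v := by
  obtain ⟨p, q, r, e, hp, hqr, he, rfl⟩ := hu
  obtain ⟨p', q', r', e', hp', hqr', he', rfl⟩ := hv
  refine tmul_tmul_mem_span ?_ (wedge2_mem_span ?_ ?_) (mem_span_of_ker_le_ker ?_)
  · exact hp' ▸ hp ▸ mem_span_singleton_self p
  · exact hqr' ▸ hqr ▸ subset_span (by simp)
  · exact hqr' ▸ hqr ▸ subset_span (by simp)
  · exact (he'.trans he.symm).le

theorem apply_eq_zero_of_mem_ln {x : V} (he : LinearMap.ker e = Φ.pl) (hx : x ∈ Φ.ln) : e x = 0 :=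
  he.ge (Φ.ln_le_pl hx)

theorem IsFlagVector.mem_spanFlagVariety (hu : IsFlagVector Φ u) : u ∈ spanFlagVariety K V :=
  subset_span (Set.mem_biUnion ⟨Φ, isFlagRep_iff.2 ⟨u, hu, rfl⟩⟩ (mem_span_singleton_self u))

theorem spanFlagVariety_le {S : Submodule K (FlagTensor K V)}
    (h : ∀ Φ u, IsFlagVector Φ u → u ∈ S) : spanFlagVariety K V ≤ S := by
  refine span_le.2 (Set.iUnion₂_subset ?_)
  rintro _ ⟨Φ, hx⟩
  obtain ⟨u, hu, rfl⟩ := isFlagRep_iff.1 hx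
  simpa using h Φ u hu

theorem exists_span_eq_pt (Φ : ProjFlag K V) : ∃ p, K ∙ p = Φ.pt :=
  exists_span_singleton_eq_of_finrank_eq_one Φ.finrank_pt

variable [Fact (finrank K V = 4)]

attribute [local instance] ProjFlag.finiteDimensional_of_fact_finrank_eq_four

theorem finrank_ker_dual (he : e ≠ 0) : finrank K (LinearMap.ker e) = 3 := by
  have := Dual.finrank_ker_add_one_of_ne_zero he
  have := Fact.out (p := finrank K V = 4)
  omega

theorem ne_zero_of_ker_eq_pl (h : LinearMap.ker e = Φ.pl) : e ≠ 0 := by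
  rintro rfl
  have := Φ.finrank_pl
  rw [← h, LinearMap.ker_zero, finrank_top, Fact.out (p := finrank K V = 4)] at this
  omega

theorem pl_eq_of_mem_span {e' : Dual K V} (he : LinearMap.ker e = Φ.pl)
    (he' : LinearMap.ker e' = Ψ.pl) (h : e ∈ K ∙ e') : Φ.pl = Ψ.pl :=
  he.symm.trans ((ker_eq_of_mem_span (ne_zero_of_ker_eq_pl he) h).trans he')

theorem IsFlagVector.ne_zero (h : IsFlagVector Φ u) : u ≠ 0 := by
  obtain ⟨p, q, r, e, hp, hqr, he, rfl⟩ := h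
  exact tmul_ne_zero_of_ne_zero (tmul_ne_zero_of_ne_zero (ne_zero_of_span_eq_pt hp)
    (wedge2_ne_zero_of_span_eq_ln hqr)) (ne_zero_of_ker_eq_pl he)

theorem isFlagVector_of_mem (hp : p ∈ Φ.pt) (hq : q ∈ Φ.ln) (hr : r ∈ Φ.ln)
    (he : Φ.pl ≤ LinearMap.ker e) (h : p ⊗ₜ[K] wedge2 K V q r ⊗ₜ[K] e ≠ 0) :
    IsFlagVector Φ (p ⊗ₜ[K] wedge2 K V q r ⊗ₜ[K] e) := by
  have hp0 : p ≠ 0 := by rintro rfl; simp at h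
  have hqr0 : wedge2 K V q r ≠ 0 := fun h0 => by simp [h0] at h
  have he0 : e ≠ 0 := by rintro rfl; simp at h
  refine ⟨p, q, r, e, ?_, ?_, ?_, rfl⟩
  · exact eq_of_le_of_finrank_eq (by simpa) (by rw [finrank_span_singleton hp0, Φ.finrank_pt])
  · refine eq_of_le_of_finrank_eq (span_le.2 (Set.pair_subset hq hr)) ?_
    rw [wedge2_ne_zero_iff_finrank.1 hqr0, Φ.finrank_ln]
  · exact (eq_of_le_of_finrank_eq he (by rw [finrank_ker_dual he0, Φ.finrank_pl])).symm

theorem exists_isFlagVector_of_tmul_ne_zero (hp : p ∈ span K {q, r}) (hq : e q = 0) (hr : e r = 0)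
    (h : p ⊗ₜ[K] wedge2 K V q r ⊗ₜ[K] e ≠ 0) :
    ∃ Φ, IsFlagVector Φ (p ⊗ₜ[K] wedge2 K V q r ⊗ₜ[K] e) := by
  have hp0 : p ≠ 0 := by rintro rfl; simp at h
  have hqr0 : wedge2 K V q r ≠ 0 := fun h0 => by simp [h0] at h
  have he0 : e ≠ 0 := by rintro rfl; simp at h
  exact ⟨⟨K ∙ p, span K {q, r}, LinearMap.ker e, finrank_span_singleton hp0,
    wedge2_ne_zero_iff_finrank.1 hqr0, finrank_ker_dual he0, by simpa,
    span_le.2 (Set.pair_subset hq hr)⟩, p, q, r, e, rfl, rfl, rfl, rfl⟩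

theorem exists_span_pair_eq_ln (hp : K ∙ p = Φ.pt) : ∃ q, span K {p, q} = Φ.ln := by
  obtain ⟨q, hq, hqpt⟩ := SetLike.exists_of_lt Φ.pt_lt_ln
  refine ⟨q, eq_of_le_of_finrank_eq (span_le.2 (Set.pair_subset ?_ hq)) ?_⟩
  · exact Φ.pt_le_ln (hp ▸ mem_span_singleton_self p)
  · rw [span_insert, sup_comm, hp, sup_comm, finrank_sup_span_singleton hqpt, Φ.finrank_pt,
      Φ.finrank_ln]

theorem exists_ker_eq_pl (Φ : ProjFlag K V) : ∃ e : Dual K V, LinearMap.ker e = Φ.pl := by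
  obtain ⟨e, he0, he⟩ := exists_le_ker_of_lt_top Φ.pl
    (lt_top_of_finrank_lt_four (Φ.finrank_pl.trans_lt (by norm_num)))
  exact ⟨e, (eq_of_le_of_finrank_eq he (by rw [finrank_ker_dual he0, Φ.finrank_pl])).symm⟩

theorem exists_isFlagVector (Φ : ProjFlag K V) : ∃ u, IsFlagVector Φ u := by
  obtain ⟨p, hp⟩ := exists_span_eq_pt Φ
  obtain ⟨q, hq⟩ := exists_span_pair_eq_ln hp
  obtain ⟨e, he⟩ := exists_ker_eq_pl Φ
  exact ⟨_, p, p, q, e, hp, hq, he, rfl⟩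

namespace IsFlagVector

theorem iff_span_eq (hu : IsFlagVector Φ u) : IsFlagVector Φ v ↔ K ∙ v = K ∙ u := by
  refine ⟨fun hv => span_singleton_eq_of_mem hv.ne_zero (hv.mem_span hu), fun h => ?_⟩
  obtain ⟨c, rfl⟩ := mem_span_singleton.1 (mem_span_singleton_of_mem hu.ne_zero
    (h ▸ mem_span_singleton_self u))
  refine hu.smul ?_
  rintro rfl
  exact hu.ne_zero (by simpa using h.symm)

theorem flag_eq (hu : IsFlagVector Φ u) (hv : IsFlagVector Ψ v) (h : u ∈ K ∙ v) : Φ = Ψ := by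
  obtain ⟨p, q, r, e, hp, hqr, he, rfl⟩ := hu
  obtain ⟨p', q', r', e', hp', hqr', he', rfl⟩ := hv
  have hp0 := ne_zero_of_span_eq_pt hp
  have hqr0 := wedge2_ne_zero_of_span_eq_ln hqr
  have he0 := ne_zero_of_ker_eq_pl he
  have hpqr := left_mem_span_of_tmul_mem_span he0 h
  refine comp_injective (funext fun j => ?_)
  match j with
  | 0 => exact pt_eq_of_mem_span hp hp' (left_mem_span_of_tmul_mem_span hqr0 hpqr)
  | 1 => exact ln_eq_of_wedge2_mem_span hqr hqr' (right_mem_span_of_tmul_mem_span hp0 hpqr)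
  | 2 => exact pl_eq_of_mem_span he he' (right_mem_span_of_tmul_mem_span
      (tmul_ne_zero_of_ne_zero hp0 hqr0) h)

theorem adj_of_add {X : ProjFlag K V} (hu : IsFlagVector Φ u) (hv : IsFlagVector Ψ v)
    (h : IsFlagVector X (u + v)) : Adj Φ Ψ := by
  obtain ⟨p, q, r, e, hp, hqr, he, rfl⟩ := hu
  obtain ⟨p', q', r', e', hp', hqr', he', rfl⟩ := hv
  obtain ⟨p'', q'', r'', e'', -, -, -, hsum⟩ := h
  obtain ⟨hln, hpl⟩ | ⟨hpt, hpl⟩ | ⟨hpt, hln⟩ := mem_span_of_tmul_tmul_add_tmul_tmul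
    (ne_zero_of_span_eq_pt hp) (wedge2_ne_zero_of_span_eq_ln hqr) (ne_zero_of_ker_eq_pl he)
    (ne_zero_of_span_eq_pt hp') (wedge2_ne_zero_of_span_eq_ln hqr') (ne_zero_of_ker_eq_pl he')
    hsum.symm
  · exact ⟨0, adjAt_zero.2 ⟨ln_eq_of_wedge2_mem_span hqr hqr' hln, pl_eq_of_mem_span he he' hpl⟩⟩
  · exact ⟨1, adjAt_one.2 ⟨pt_eq_of_mem_span hp hp' hpt, pl_eq_of_mem_span he he' hpl⟩⟩
  · exact ⟨2, adjAt_two.2 ⟨pt_eq_of_mem_span hp hp' hpt, ln_eq_of_wedge2_mem_span hqr hqr' hln⟩⟩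

theorem exists_add_of_adjAt_zero (hu : IsFlagVector Φ u) (hv : IsFlagVector Ψ v)
    (h : AdjAt 0 Φ Ψ) (huv : u + v ≠ 0) : ∃ X, IsFlagVector X (u + v) := by
  obtain ⟨hln, hpl⟩ := adjAt_zero.1 h
  obtain ⟨p, q, r, e, hp, hqr, he, rfl⟩ := hu
  obtain ⟨p', hp'⟩ := exists_span_eq_pt Ψ
  obtain ⟨b, rfl⟩ := mem_span_singleton.1
    (hv.mem_span ⟨p', q, r, e, hp', hqr.trans hln, he.trans hpl, rfl⟩)
  simp only [TensorProduct.smul_tmul', ← TensorProduct.add_tmul] at huv ⊢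
  refine exists_isFlagVector_of_tmul_ne_zero (hqr ▸ add_mem ?_ (smul_mem _ _ (hln ▸ ?_)))
    (apply_eq_zero_of_mem_ln he ?_) (apply_eq_zero_of_mem_ln he ?_) huv
  · exact Φ.pt_le_ln (hp ▸ mem_span_singleton_self p)
  · exact Ψ.pt_le_ln (hp' ▸ mem_span_singleton_self p')
  · exact hqr ▸ subset_span (by simp)
  · exact hqr ▸ subset_span (by simp)

theorem exists_add_of_adjAt_one (hu : IsFlagVector Φ u) (hv : IsFlagVector Ψ v)
    (h : AdjAt 1 Φ Ψ) (huv : u + v ≠ 0) : ∃ X, IsFlagVector X (u + v) := by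
  obtain ⟨hpt, hpl⟩ := adjAt_one.1 h
  obtain ⟨p, hp⟩ := exists_span_eq_pt Φ
  obtain ⟨q, hq⟩ := exists_span_pair_eq_ln hp
  obtain ⟨q', hq'⟩ := exists_span_pair_eq_ln (hp.trans hpt)
  obtain ⟨e, he⟩ := exists_ker_eq_pl Φ
  obtain ⟨a, rfl⟩ := mem_span_singleton.1 (hu.mem_span ⟨p, p, q, e, hp, hq, he, rfl⟩)
  obtain ⟨b, rfl⟩ := mem_span_singleton.1
    (hv.mem_span ⟨p, p, q', e, hp.trans hpt, hq', he.trans hpl, rfl⟩)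
  have hsum : wedge2 K V p (a • q + b • q') = a • wedge2 K V p q + b • wedge2 K V p q' := by
    simp only [← wedgeBilin_apply, map_add, map_smul]
  have huv_eq : a • p ⊗ₜ[K] wedge2 K V p q ⊗ₜ[K] e + b • p ⊗ₜ[K] wedge2 K V p q' ⊗ₜ[K] e =
      p ⊗ₜ[K] wedge2 K V p (a • q + b • q') ⊗ₜ[K] e := by
    simp only [hsum, TensorProduct.tmul_add, TensorProduct.tmul_smul, TensorProduct.add_tmul,
      TensorProduct.smul_tmul']
  have hep : e p = 0 := apply_eq_zero_of_mem_ln he (hq ▸ subset_span (by simp))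
  have heq : e q = 0 := apply_eq_zero_of_mem_ln he (hq ▸ subset_span (by simp))
  have heq' : e q' = 0 :=
    apply_eq_zero_of_mem_ln (he.trans hpl) (hq' ▸ subset_span (by simp))
  rw [huv_eq] at huv ⊢
  exact exists_isFlagVector_of_tmul_ne_zero (subset_span (by simp)) hep (by simp [heq, heq']) huv

theorem exists_add_of_adjAt_two (hu : IsFlagVector Φ u) (hv : IsFlagVector Ψ v)
    (h : AdjAt 2 Φ Ψ) (huv : u + v ≠ 0) : ∃ X, IsFlagVector X (u + v) := by
  obtain ⟨hpt, hln⟩ := adjAt_two.1 h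
  obtain ⟨p, q, r, e, hp, hqr, he, rfl⟩ := hu
  obtain ⟨e', he'⟩ := exists_ker_eq_pl Ψ
  obtain ⟨b, rfl⟩ := mem_span_singleton.1
    (hv.mem_span ⟨p, q, r, e', hp.trans hpt, hqr.trans hln, he', rfl⟩)
  simp only [← TensorProduct.tmul_smul, ← TensorProduct.tmul_add] at huv ⊢
  have hpln : p ∈ span K {q, r} := hqr ▸ Φ.pt_le_ln (hp ▸ mem_span_singleton_self p)
  have heb {x : V} (hx : x ∈ Φ.ln) : (e + b • e') x = 0 := by
    simp [apply_eq_zero_of_mem_ln he hx, apply_eq_zero_of_mem_ln he' (hln ▸ hx)]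
  exact exists_isFlagVector_of_tmul_ne_zero hpln (heb (hqr ▸ subset_span (by simp)))
    (heb (hqr ▸ subset_span (by simp))) huv

theorem exists_add (hu : IsFlagVector Φ u) (hv : IsFlagVector Ψ v) (h : Adj Φ Ψ)
    (huv : u + v ≠ 0) : ∃ X, IsFlagVector X (u + v) := by
  obtain ⟨i, hi⟩ := h
  match i with
  | 0 => exact hu.exists_add_of_adjAt_zero hv hi huv
  | 1 => exact hu.exists_add_of_adjAt_one hv hi huv
  | 2 => exact hu.exists_add_of_adjAt_two hv hi huv

theorem exists_smul_add_smul (hu : IsFlagVector Φ u) (hv : IsFlagVector Ψ v) (h : Adj Φ Ψ)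
    (a b : K) (huv : a • u + b • v ≠ 0) : ∃ X, IsFlagVector X (a • u + b • v) := by
  obtain rfl | ha := eq_or_ne a 0
  · have hb : b ≠ 0 := by rintro rfl; simp at huv
    exact ⟨Ψ, by simpa using hv.smul hb⟩
  obtain rfl | hb := eq_or_ne b 0
  · exact ⟨Φ, by simpa using hu.smul ha⟩
  · exact (hu.smul ha).exists_add (hv.smul hb) h huv

end IsFlagVector

theorem relatedPts_span_iff_adj (hu : IsFlagVector Φ u) (hv : IsFlagVector Ψ v) :
    RelatedPts K V (K ∙ u) (K ∙ v) ↔ Adj Φ Ψ := by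
  refine ⟨?_, fun h => or_iff_not_imp_left.2 fun hne => ⟨hne, fun z hz hle => ?_⟩⟩
  · rintro (h | ⟨hne, h⟩)
    · obtain rfl := hu.flag_eq hv (h ▸ mem_span_singleton_self u)
      exact (AdjAt.refl 0 Φ).adj
    · have huv : u + v ≠ 0 := fun h0 => hne (span_singleton_eq_of_mem hu.ne_zero (by
        simp [eq_neg_of_add_eq_zero_left h0]))
      obtain ⟨X, hX⟩ := h (K ∙ (u + v)) (finrank_span_singleton huv) (by
        simpa using add_mem_sup (mem_span_singleton_self u) (mem_span_singleton_self v))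
      obtain ⟨w, hw, hw'⟩ := isFlagRep_iff.1 hX
      exact hu.adj_of_add hv (hw.iff_span_eq.2 hw')
  · obtain ⟨w, rfl⟩ := exists_span_singleton_eq_of_finrank_eq_one hz
    have hw0 : w ≠ 0 := by
      rintro rfl
      rw [span_zero_singleton, finrank_bot] at hz
      exact zero_ne_one hz
    obtain ⟨u', hu', v', hv', rfl⟩ := mem_sup.1 (hle (mem_span_singleton_self w))
    obtain ⟨a, rfl⟩ := mem_span_singleton.1 hu'
    obtain ⟨b, rfl⟩ := mem_span_singleton.1 hv'
    obtain ⟨X, hX⟩ := hu.exists_smul_add_smul hv h a b hw0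
    exact ⟨X, isFlagRep_iff.2 ⟨_, hX, rfl⟩⟩

/-- The parametrization `φ` of the flag variety by flags. -/
noncomputable def flagVarietyEquiv : ProjFlag K V ≃ flagVariety K V :=
  .ofBijective (fun Φ => ⟨K ∙ (exists_isFlagVector Φ).choose, Φ,
    isFlagRep_iff.2 ⟨_, (exists_isFlagVector Φ).choose_spec, rfl⟩⟩) <| by
    refine ⟨fun Φ Ψ h => ?_, ?_⟩
    · refine (exists_isFlagVector Φ).choose_spec.flag_eq (exists_isFlagVector Ψ).choose_spec ?_
      exact (congrArg Subtype.val h).le (mem_span_singleton_self _)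
    · rintro ⟨x, Φ, hx⟩
      obtain ⟨u, hu, rfl⟩ := isFlagRep_iff.1 hx
      exact ⟨Φ, Subtype.ext (hu.iff_span_eq.1 (exists_isFlagVector Φ).choose_spec)⟩

theorem span_eq_flagVarietyEquiv_iff : K ∙ u = (flagVarietyEquiv Φ).1 ↔ IsFlagVector Φ u :=
  (exists_isFlagVector Φ).choose_spec.iff_span_eq.symm

theorem relatedPts_flagVarietyEquiv :
    RelatedPts K V (flagVarietyEquiv Φ).1 (flagVarietyEquiv Ψ).1 ↔ Adj Φ Ψ :=
  relatedPts_span_iff_adj (exists_isFlagVector Φ).choose_spec (exists_isFlagVector Ψ).choose_spec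

end FlagVectors

section Rigidity

open Module Submodule ProjFlag

theorem mul_eq_mul_of_map_add_smul_mem_span {K L A M : Type*} [Field K] [Field L] [AddCommGroup A]
    [Module K A] [AddCommGroup M] [Module L M] {W : Submodule K A} {σ₁ σ₂ : K →+* L}
    {f₁ : W →ₛₗ[σ₁] M} {f₂ : W →ₛₗ[σ₂] M} (hσ₂ : Function.Surjective σ₂)
    (hf₂ : Function.Injective f₂) {u v : W} {b c : L}
    (huv : LinearIndependent K ![(u : A), (v : A)]) (hu : f₁ u = b • f₂ u) (hv : f₁ v = c • f₂ v)
    {a : K} (h : f₁ (u + a • v) ∈ L ∙ f₂ (u + a • v)) : σ₁ a * c = σ₂ a * b := by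
  obtain ⟨d, hd⟩ := mem_span_singleton.1 h
  simp only [map_add, map_smulₛₗ, hu, hv] at hd
  obtain ⟨x, hx⟩ := hσ₂ (d - b)
  obtain ⟨y, hy⟩ := hσ₂ (d * σ₂ a - σ₁ a * c)
  have hxy : x • u + y • v = 0 := hf₂ <| by
    simp only [map_add, map_smulₛₗ, hx, hy, map_zero]
    linear_combination (norm := module) hd
  obtain ⟨rfl, rfl⟩ := LinearIndependent.pair_iff.1 huv x y (congrArg Subtype.val hxy)
  rw [map_zero] at hx hy
  linear_combination hy - σ₂ a * hx

variable {K L V M : Type*} [Field K] [Field L] [AddCommGroup V] [Module K V] [AddCommGroup M]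
  [Module L M] {σ σ₁ σ₂ : K →+* L} {Φ Ψ : ProjFlag K V}

theorem semilinearMap_ext_isFlagVector {f g : spanFlagVariety K V →ₛₗ[σ] M}
    (h : ∀ (Φ : ProjFlag K V) (v : spanFlagVariety K V), IsFlagVector Φ v.1 → f v = g v) :
    f = g := by
  have hle : spanFlagVariety K V ≤ (LinearMap.eqLocus f g).map (spanFlagVariety K V).subtype :=
    spanFlagVariety_le fun Φ u hu => ⟨⟨u, hu.mem_spanFlagVariety⟩, h Φ _ hu, rfl⟩
  ext v
  obtain ⟨w, hw, hwv⟩ := hle v.2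
  rwa [← Subtype.ext hwv]

variable [Fact (finrank K V = 4)] {f₁ : spanFlagVariety K V →ₛₗ[σ₁] M}
  {f₂ : spanFlagVariety K V →ₛₗ[σ₂] M}

theorem mul_eq_mul_of_adj (hσ₂ : Function.Surjective σ₂) (hf₂ : Function.Injective f₂)
    (h : ∀ (Φ : ProjFlag K V) (v : spanFlagVariety K V), IsFlagVector Φ v.1 → f₁ v ∈ L ∙ f₂ v)
    {u v : spanFlagVariety K V} {b c : L} (hu : IsFlagVector Φ u.1) (hv : IsFlagVector Ψ v.1)
    (hne : Φ ≠ Ψ) (hadj : Adj Φ Ψ) (hb : f₁ u = b • f₂ u) (hc : f₁ v = c • f₂ v) (a : K) :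
    σ₁ a * c = σ₂ a * b := by
  have huv : LinearIndependent K ![u.1, v.1] :=
    linearIndependent_pair_of_notMem_span hu.ne_zero fun hmem => hne (hv.flag_eq hu hmem).symm
  have hsum : (1 : K) • u.1 + a • v.1 ≠ 0 := fun h0 =>
    one_ne_zero (LinearIndependent.pair_iff.1 huv 1 a h0).1
  obtain ⟨X, hX⟩ := hu.exists_smul_add_smul hv hadj 1 a hsum
  rw [one_smul] at hX
  exact mul_eq_mul_of_map_add_smul_mem_span hσ₂ hf₂ huv hb hc (h X (u + a • v) hX)

/-- The scalars by which `f₁` and `f₂` differ at two adjacent flags coincide because the line of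
`𝒢` joining them consists of flag vectors; as the flags are connected under adjacency, a single
scalar remains. -/
theorem ringHom_eq_and_scalar_eq (hσ₂ : Function.Surjective σ₂) (hf₂ : Function.Injective f₂)
    (h : ∀ (Φ : ProjFlag K V) (v : spanFlagVariety K V), IsFlagVector Φ v.1 → f₁ v ∈ L ∙ f₂ v)
    {u : ProjFlag K V → spanFlagVariety K V} {c : ProjFlag K V → L}
    (hu : ∀ Φ, IsFlagVector Φ (u Φ).1) (hc0 : ∀ Φ, c Φ ≠ 0)
    (hc : ∀ Φ, f₁ (u Φ) = c Φ • f₂ (u Φ)) : σ₁ = σ₂ ∧ ∀ Φ Ψ, c Φ = c Ψ := by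
  have hmul {Φ Ψ : ProjFlag K V} (hne : Φ ≠ Ψ) (hadj : Adj Φ Ψ) (a : K) :
      σ₁ a * c Ψ = σ₂ a * c Φ :=
    mul_eq_mul_of_adj hσ₂ hf₂ h (hu Φ) (hu Ψ) hne hadj (hc Φ) (hc Ψ) a
  have hconst (Φ Ψ : ProjFlag K V) : c Φ = c Ψ := by
    refine eq_of_forall_adj (fun F G hFG => ?_) Φ Ψ
    obtain rfl | hne := eq_or_ne F G
    · rfl
    · simpa using (hmul hne hFG 1).symm
  obtain ⟨F⟩ := ProjFlag.nonempty (K := K) (V := V)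
  obtain ⟨G, hne, hadj⟩ := exists_adjAt_ne 0 F
  refine ⟨RingHom.ext fun a => mul_right_cancel₀ (hc0 F) ?_, hconst⟩
  simpa [hconst G F] using hmul hne hadj.adj a

theorem exists_eq_smul_of_forall_isFlagVector (hσ₂ : Function.Surjective σ₂)
    (hf₂ : Function.Injective f₂)
    (h : ∀ (Φ : ProjFlag K V) (v : spanFlagVariety K V),
      IsFlagVector Φ v.1 → L ∙ f₁ v = L ∙ f₂ v) :
    ∃ c : L, c ≠ 0 ∧ ∀ v, f₁ v = c • f₂ v := by
  have hmem (Φ : ProjFlag K V) (v : spanFlagVariety K V) (hv : IsFlagVector Φ v.1) :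
      f₁ v ∈ L ∙ f₂ v := h Φ v hv ▸ mem_span_singleton_self _
  have hflag (Φ : ProjFlag K V) : ∃ (u : spanFlagVariety K V) (c : L),
      IsFlagVector Φ u.1 ∧ c • f₂ u = f₁ u := by
    obtain ⟨u, hu⟩ := exists_isFlagVector Φ
    obtain ⟨c, hc⟩ := mem_span_singleton.1 (hmem Φ ⟨u, hu.mem_spanFlagVariety⟩ hu)
    exact ⟨_, c, hu, hc⟩
  choose u c hu hc using hflag
  have hc0 (Φ : ProjFlag K V) : c Φ ≠ 0 := by
    intro h0
    have hspan := h Φ (u Φ) (hu Φ)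
    rw [← hc, h0, zero_smul, span_zero_singleton, eq_comm, span_singleton_eq_bot,
      map_eq_zero_iff f₂ hf₂] at hspan
    exact (hu Φ).ne_zero (congrArg Subtype.val hspan)
  obtain ⟨rfl, hconst⟩ := ringHom_eq_and_scalar_eq hσ₂ hf₂ hmem hu hc0 fun Φ => (hc Φ).symm
  obtain ⟨F⟩ := ProjFlag.nonempty (K := K) (V := V)
  refine ⟨c F, hc0 F, fun v => LinearMap.congr_fun
    (semilinearMap_ext_isFlagVector (g := c F • f₂) fun Φ v hv => ?_) v⟩
  obtain ⟨a, ha⟩ := mem_span_singleton.1 (hv.mem_span (hu Φ))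
  obtain rfl : a • u Φ = v := Subtype.ext ha
  rw [map_smulₛₗ, LinearMap.smul_apply, map_smulₛₗ, ← hc, hconst Φ F, smul_comm]

end Rigidity

section Induced

open Module Submodule ProjFlag

variable {K V : Type*} [Field K] [AddCommGroup V] [Module K V]

/-- The transformation `e` of the flags is induced by a semilinear endomorphism of
`V ⊗ Λ²V ⊗ V*` carrying the vectors that represent `Φ` to vectors that represent `e Φ`. -/
def IsInduced (e : ProjFlag K V → ProjFlag K V) : Prop :=
  ∃ (ζ : K ≃+* K) (L : FlagTensor K V →ₛₗ[(ζ : K →+* K)] FlagTensor K V),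
    ∀ Φ u, IsFlagVector Φ u → IsFlagVector (e Φ) (L u)

namespace IsInduced

variable {e e' : ProjFlag K V → ProjFlag K V}

theorem comp (he : IsInduced e) (he' : IsInduced e') : IsInduced (e ∘ e') := by
  obtain ⟨ζ, L, hL⟩ := he
  obtain ⟨ζ', L', hL'⟩ := he'
  have : RingHomCompTriple (ζ' : K →+* K) (ζ : K →+* K) (ζ'.trans ζ : K ≃+* K) := ⟨rfl⟩
  exact ⟨ζ'.trans ζ, L.comp L', fun Φ u hu => hL _ _ (hL' _ _ hu)⟩

theorem exists_semilinearMap_spanFlagVariety (he : IsInduced e) :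
    ∃ (ζ : K ≃+* K) (f : spanFlagVariety K V →ₛₗ[(ζ : K →+* K)] spanFlagVariety K V),
      ∀ (Φ : ProjFlag K V) (v : spanFlagVariety K V),
        IsFlagVector Φ v.1 → IsFlagVector (e Φ) (f v).1 := by
  obtain ⟨ζ, L, hL⟩ := he
  have hW : spanFlagVariety K V ≤ (spanFlagVariety K V).comap L :=
    spanFlagVariety_le fun Φ u hu => (hL Φ u hu).mem_spanFlagVariety
  exact ⟨ζ, (L.domRestrict (spanFlagVariety K V)).codRestrict _ fun v => hW v.2,
    fun Φ v hv => hL Φ v hv⟩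

end IsInduced

variable [Fact (finrank K V = 4)]

theorem exists_comp_eq_smul {σ σ' : K →+* K} {e : ProjFlag K V ≃ ProjFlag K V}
    {f : spanFlagVariety K V →ₛₗ[σ] spanFlagVariety K V}
    {f' : spanFlagVariety K V →ₛₗ[σ'] spanFlagVariety K V}
    (hf : ∀ (Φ : ProjFlag K V) (v : spanFlagVariety K V),
      IsFlagVector Φ v.1 → IsFlagVector (e Φ) (f v).1)
    (hf' : ∀ (Φ : ProjFlag K V) (v : spanFlagVariety K V),
      IsFlagVector Φ v.1 → IsFlagVector (e.symm Φ) (f' v).1) :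
    ∃ c : K, c ≠ 0 ∧ ∀ v, f' (f v) = c • v := by
  have : RingHomCompTriple σ σ' (σ'.comp σ) := ⟨rfl⟩
  obtain ⟨c, hc0, hc⟩ := exists_eq_smul_of_forall_isFlagVector
    (f₁ := (spanFlagVariety K V).subtype.comp (f'.comp f)) (f₂ := (spanFlagVariety K V).subtype)
    Function.surjective_id Subtype.val_injective fun Φ v hv =>
      hv.iff_span_eq.1 (e.symm_apply_apply Φ ▸ hf' _ _ (hf _ _ hv))
  exact ⟨c, hc0, fun v => Subtype.ext (hc v)⟩

theorem IsInduced.exists_bijective {e : ProjFlag K V ≃ ProjFlag K V} (he : IsInduced e)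
    (he' : IsInduced e.symm) :
    ∃ (ζ : K ≃+* K) (f : spanFlagVariety K V →ₛₗ[(ζ : K →+* K)] spanFlagVariety K V),
      Function.Bijective f ∧ ∀ (Φ : ProjFlag K V) (v : spanFlagVariety K V),
        IsFlagVector Φ v.1 → IsFlagVector (e Φ) (f v).1 := by
  obtain ⟨ζ, f, hf⟩ := he.exists_semilinearMap_spanFlagVariety
  obtain ⟨ζ', f', hf'⟩ := he'.exists_semilinearMap_spanFlagVariety
  obtain ⟨c, hc0, hc⟩ := exists_comp_eq_smul hf hf'
  obtain ⟨d, hd0, hd⟩ := exists_comp_eq_smul (e := e.symm) hf' hf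
  refine ⟨ζ, f, ⟨fun x y hxy => ?_, fun y => ⟨f' (d⁻¹ • y), ?_⟩⟩, hf⟩
  · exact smul_right_injective _ hc0 ((hc x).symm.trans ((congrArg f' hxy).trans (hc y)))
  · rw [hd, smul_inv_smul₀ hd0]

attribute [local instance] RingHomInvPair.of_ringEquiv RingHomInvPair.of_ringEquiv_symm

theorem IsTypePreserving.isInduced {e : ProjFlag K V ≃ ProjFlag K V} (he : IsTypePreserving e) :
    IsInduced e := by
  obtain ⟨ζ, f, hf⟩ := he.exists_semilinearEquiv
  obtain ⟨Λ, hΛ⟩ := exists_semilinearMap_wedge2 f.toLinearMap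
  let D : Dual K V →ₛₗ[(ζ : K →+* K)] Dual K V := (f.arrowCongr ζ.toSemilinearEquiv).toLinearMap
  have hD (ε : Dual K V) : LinearMap.ker (D ε) = (LinearMap.ker ε).map f.toLinearMap := by
    ext y
    obtain ⟨x, rfl⟩ := f.surjective y
    simp [D]
  refine ⟨ζ, TensorProduct.map (TensorProduct.map f.toLinearMap Λ) D, ?_⟩
  rintro Φ _ ⟨p, q, r, ε, hp, hqr, hε, rfl⟩
  refine ⟨f p, f q, f r, D ε, ?_, ?_, ?_, ?_⟩
  · simpa [map_span, ← hp] using (hf Φ 0).symm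
  · simpa [map_span, ← hqr, Set.image_pair] using (hf Φ 1).symm
  · simpa [hD, hε] using (hf Φ 2).symm
  · simp [hΛ]

end Induced

section Hodge

open Module Submodule

variable {K V : Type*} [Field K] [AddCommGroup V] [Module K V]

theorem pairingDual_bijective [FiniteDimensional K V] (n : ℕ) :
    Function.Bijective (exteriorPower.pairingDual K V n) := by
  let b := finBasis K V
  let E := (b.dualBasis.exteriorPower n).equiv (b.exteriorPower n).dualBasis (.refl _)
  have hE : exteriorPower.pairingDual K V n = E := by
    refine (b.dualBasis.exteriorPower n).ext fun s => ?_
    rw [LinearEquiv.coe_coe, Basis.equiv_apply, Equiv.refl_apply, Basis.coe_dualBasis,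
      exteriorPower.basis_coord, exteriorPower.basis_apply, Basis.coe_dualBasis]
    rfl
  exact hE ▸ E.bijective

theorem pairingDual_wedge2 (φ ψ : Dual K V) (x y : V) :
    exteriorPower.pairingDual K V 2 (wedge2 K (Dual K V) φ ψ) (wedge2 K V x y) =
      φ x * ψ y - ψ x * φ y :=
  (exteriorPower.pairingDual_ιMulti_ιMulti ![φ, ψ] ![x, y]).trans (Matrix.det_fin_two _)

theorem exists_linearMap_wedge2_eq_apply (ω : V [⋀^Fin 4]→ₗ[K] K) :
    ∃ D : ⋀[K]^2 V →ₗ[K] Dual K (⋀[K]^2 V),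
      ∀ q r x y, D (wedge2 K V q r) (wedge2 K V x y) = ω ![q, r, x, y] := by
  let B : V →ₗ[K] V →ₗ[K] Dual K (⋀[K]^2 V) :=
    (AlternatingMap.curryLeftLinearMap ∘ₗ ω.curryLeft).compr₂
      exteriorPower.alternatingMapLinearEquiv.toLinearMap
  have hB : B.IsAlt := fun q => by simp [B]
  refine ⟨wedgeLift B hB, fun q r x y => ?_⟩
  rw [wedgeLift_wedge2]
  exact exteriorPower.alternatingMapLinearEquiv_apply_ιMulti _ ![x, y]

theorem exists_basis_two_eq_three_eq (hV : finrank K V = 4) {q r : V}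
    (h : LinearIndependent K ![q, r]) : ∃ b : Basis (Fin 4) K V, b 2 = q ∧ b 3 = r := by
  obtain ⟨t, ht⟩ := exists_linearIndependent_cons_of_lt_finrank h (by omega)
  obtain ⟨s, hs⟩ := exists_linearIndependent_cons_of_lt_finrank ht (by omega)
  let b := basisOfLinearIndependentOfCardEqFinrank hs (by simp [hV])
  exact ⟨b, by simp [b], by simp [b]⟩

theorem basis_det_two_three (b : Basis (Fin 4) K V) (x y : V) :
    b.det ![b 2, b 3, x, y] = b.coord 0 x * b.coord 1 y - b.coord 1 x * b.coord 0 y := by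
  have h1 : Fin.succAbove (2 : Fin 4) 1 = 1 := rfl
  have h2 : Fin.succAbove (2 : Fin 4) 2 = 3 := rfl
  rw [Basis.det_apply, Matrix.det_succ_column_zero]
  simp [Matrix.det_fin_three, Basis.toMatrix_apply, Finsupp.single_apply, h1, h2,
    mul_comm]

theorem exists_hodge (hV : finrank K V = 4) :
    ∃ S : ⋀[K]^2 V →ₗ[K] ⋀[K]^2 (Dual K V), ∀ q r, wedge2 K V q r ≠ 0 →
      ∃ φ ψ : Dual K V, S (wedge2 K V q r) = wedge2 K (Dual K V) φ ψ ∧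
        wedge2 K (Dual K V) φ ψ ≠ 0 ∧ φ q = 0 ∧ φ r = 0 ∧ ψ q = 0 ∧ ψ r = 0 := by
  have : FiniteDimensional K V := .of_finrank_pos (by omega)
  let ω := (finBasisOfFinrankEq K V hV).det
  obtain ⟨D, hD⟩ := exists_linearMap_wedge2_eq_apply ω
  let P := LinearEquiv.ofBijective (exteriorPower.pairingDual K V 2) (pairingDual_bijective 2)
  refine ⟨P.symm ∘ₗ D, fun q r hqr => ?_⟩
  obtain ⟨b, rfl, rfl⟩ := exists_basis_two_eq_three_eq hV (wedge2_ne_zero_iff.1 hqr)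
  have hω : ω b ≠ 0 := ((finBasisOfFinrankEq K V hV).isUnit_det b).ne_zero
  have hS : P.symm (D (wedge2 K V (b 2) (b 3))) =
      wedge2 K (Dual K V) (ω b • b.coord 0) (b.coord 1) := by
    rw [LinearEquiv.symm_apply_eq]
    refine semilinearMap_ext_wedge2 fun x y => ?_
    calc D (wedge2 K V (b 2) (b 3)) (wedge2 K V x y)
      _ = ω b * b.det ![b 2, b 3, x, y] :=
        (hD _ _ _ _).trans (congrArg (· ![b 2, b 3, x, y]) (ω.eq_smul_basis_det b))
      _ = (ω b • b.coord 0) x * b.coord 1 y - b.coord 1 x * (ω b • b.coord 0) y := by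
        simp only [basis_det_two_three, LinearMap.smul_apply, smul_eq_mul]
        ring
      _ = P (wedge2 K (Dual K V) (ω b • b.coord 0) (b.coord 1)) (wedge2 K V x y) :=
        (pairingDual_wedge2 _ _ x y).symm
  refine ⟨ω b • b.coord 0, b.coord 1, hS, fun h0 => ?_, by simp, by simp, by simp, by simp⟩
  have hpair := pairingDual_wedge2 (ω b • b.coord 0) (b.coord 1) (b 0) (b 1)
  exact hω (by simpa [h0] using hpair.symm)

end Hodge

section Polarity

open Module Submodule ProjFlag

variable {K V : Type*} [Field K] [AddCommGroup V] [Module K V]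

theorem exists_isSymm_nondegenerate (K V : Type*) [Field K] [AddCommGroup V] [Module K V]
    [FiniteDimensional K V] : ∃ B : LinearMap.BilinForm K V, B.IsSymm ∧ B.Nondegenerate := by
  let b := finBasis K V
  have hflip : b.toDual = LinearMap.flip b.toDual :=
    b.ext fun i => b.ext fun j => by simp [Basis.toDual_apply, eq_comm]
  have hsymm (x y : V) : b.toDual x y = b.toDual y x := LinearMap.congr_fun₂ hflip x y
  have hinj (x : V) (hx : ∀ y, b.toDual x y = 0) : x = 0 := b.toDual_inj x (LinearMap.ext hx)
  exact ⟨b.toDual, ⟨hsymm⟩, hinj, fun y hy => hinj y fun x => (hsymm y x).trans (hy x)⟩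

theorem wedge2_map_ne_zero {V₂ : Type*} [AddCommGroup V₂] [Module K V₂] {f : V →ₗ[K] V₂}
    (hf : Function.Injective f) {q r : V} (h : wedge2 K V q r ≠ 0) :
    wedge2 K V₂ (f q) (f r) ≠ 0 := by
  have hli := (wedge2_ne_zero_iff.1 h).map' f (LinearMap.ker_eq_bot.2 hf)
  have hcomp : f ∘ ![q, r] = ![f q, f r] := by ext i; fin_cases i <;> rfl
  exact wedge2_ne_zero_iff.2 (hcomp ▸ hli)

theorem toDual_symm_mem_orthogonal [FiniteDimensional K V] {B : LinearMap.BilinForm K V}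
    (hB : B.Nondegenerate) (hsymm : B.IsSymm) {φ : Dual K V} {S : Submodule K V}
    (h : S ≤ LinearMap.ker φ) : (B.toDual hB).symm φ ∈ B.orthogonal S := fun x hx =>
  calc B x ((B.toDual hB).symm φ) = B ((B.toDual hB).symm φ) x := hsymm.eq _ _
    _ = φ x := LinearMap.BilinForm.apply_toDual_symm_apply φ x
    _ = 0 := h hx

variable [Fact (finrank K V = 4)]

attribute [local instance] ProjFlag.finiteDimensional_of_fact_finrank_eq_four

theorem finrank_orthogonal_of_nondegenerate {B : LinearMap.BilinForm K V} (hB : B.Nondegenerate)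
    {S : Submodule K V} {m n : ℕ} (hS : finrank K S = m) (hmn : m + n = 4) :
    finrank K (B.orthogonal S) = n := by
  have := LinearMap.BilinForm.finrank_orthogonal hB S
  have := Fact.out (p := finrank K V = 4)
  omega

section Polar

variable {B : LinearMap.BilinForm K V} (hB : B.Nondegenerate)

/-- The image of a flag under the polarity of the projective space defined by a nondegenerate
bilinear form. -/
noncomputable def polar (Φ : ProjFlag K V) : ProjFlag K V where
  pt := B.orthogonal Φ.pl
  ln := B.orthogonal Φ.ln
  pl := B.orthogonal Φ.pt
  finrank_pt := finrank_orthogonal_of_nondegenerate hB Φ.finrank_pl rfl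
  finrank_ln := finrank_orthogonal_of_nondegenerate hB Φ.finrank_ln rfl
  finrank_pl := finrank_orthogonal_of_nondegenerate hB Φ.finrank_pt rfl
  pt_le_ln := LinearMap.BilinForm.orthogonal_le Φ.ln_le_pl
  ln_le_pl := LinearMap.BilinForm.orthogonal_le Φ.pt_le_ln

theorem polar_comp (Φ : ProjFlag K V) (j : Fin 3) :
    (polar hB Φ).comp j = B.orthogonal (Φ.comp j.rev) := by
  fin_cases j <;> rfl

theorem polar_involutive (hsymm : B.IsSymm) : Function.Involutive (polar hB) := fun Φ =>
  comp_injective <| funext fun j => by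
    rw [polar_comp, polar_comp, Fin.rev_rev,
      LinearMap.BilinForm.orthogonal_orthogonal hB hsymm.isRefl]

theorem polar_comp_eq_iff (hsymm : B.IsSymm) (Φ Ψ : ProjFlag K V) (j : Fin 3) :
    (polar hB Φ).comp j = (polar hB Ψ).comp j ↔ Φ.comp j.rev = Ψ.comp j.rev := by
  rw [polar_comp, polar_comp]
  refine ⟨fun h => ?_, congrArg _⟩
  rw [← LinearMap.BilinForm.orthogonal_orthogonal hB hsymm.isRefl (Φ.comp j.rev), h,
    LinearMap.BilinForm.orthogonal_orthogonal hB hsymm.isRefl]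

theorem isInduced_polar (hsymm : B.IsSymm) : IsInduced (polar hB) := by
  obtain ⟨S, hS⟩ := exists_hodge (K := K) (V := V) Fact.out
  let d := B.toDual hB
  obtain ⟨T, hT⟩ := exists_semilinearMap_wedge2 d.symm.toLinearMap
  let L : FlagTensor K V →ₗ[K] FlagTensor K V :=
    (TensorProduct.assoc K V (⋀[K]^2 V) (Dual K V)).symm.toLinearMap ∘ₗ
      TensorProduct.map d.symm.toLinearMap
        (TensorProduct.map (T ∘ₗ S) d.toLinearMap ∘ₗ
          (TensorProduct.comm K V (⋀[K]^2 V)).toLinearMap) ∘ₗ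
      (TensorProduct.comm K (V ⊗[K] ⋀[K]^2 V) (Dual K V)).toLinearMap
  refine ⟨RingEquiv.refl K, { toFun := L, map_add' := L.map_add, map_smul' := L.map_smul }, ?_⟩
  rintro Φ _ ⟨p, q, r, e, hp, hqr, he, rfl⟩
  obtain ⟨φ, ψ, hφψ, hφψ0, hφq, hφr, hψq, hψr⟩ := hS q r (wedge2_ne_zero_of_span_eq_ln hqr)
  have hL : L (p ⊗ₜ wedge2 K V q r ⊗ₜ e) =
      d.symm e ⊗ₜ wedge2 K V (d.symm φ) (d.symm ψ) ⊗ₜ d p := by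
    simp [L, hφψ, hT]
  have hker {χ : Dual K V} (hq : χ q = 0) (hr : χ r = 0) : Φ.ln ≤ LinearMap.ker χ :=
    hqr ▸ span_le.2 (Set.pair_subset hq hr)
  change IsFlagVector _ (L _)
  rw [hL]
  refine isFlagVector_of_mem (toDual_symm_mem_orthogonal hB hsymm he.ge)
    (toDual_symm_mem_orthogonal hB hsymm (hker hφq hφr))
    (toDual_symm_mem_orthogonal hB hsymm (hker hψq hψr)) (fun y hy => ?_) ?_
  · exact hy p (hp ▸ mem_span_singleton_self p)
  · exact tmul_ne_zero_of_ne_zero (tmul_ne_zero_of_ne_zero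
      (d.symm.map_ne_zero_iff.2 (ne_zero_of_ker_eq_pl he))
        (wedge2_map_ne_zero d.symm.injective hφψ0))
      (d.map_ne_zero_iff.2 (ne_zero_of_span_eq_pt hp))

end Polar

theorem isInduced_of_adj_iff {e : ProjFlag K V ≃ ProjFlag K V}
    (he : ∀ F G, Adj F G ↔ Adj (e F) (e G)) : IsInduced e := by
  obtain ⟨π, rfl | rfl, hπ⟩ := exists_perm_comp_eq_iff he
  · exact IsTypePreserving.isInduced hπ
  obtain ⟨B, hsymm, hB⟩ := exists_isSymm_nondegenerate K V
  let δ := (polar_involutive hB hsymm).toPerm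
  have hδe : IsTypePreserving (e.trans δ) := fun j F G =>
    (hπ j F G).trans (polar_comp_eq_iff hB hsymm (e F) (e G) j).symm
  have heq : (e : ProjFlag K V → ProjFlag K V) = polar hB ∘ (e.trans δ) :=
    funext fun F => (polar_involutive hB hsymm (e F)).symm
  exact heq ▸ (isInduced_polar hB hsymm).comp hδe.isInduced

end Polarity

/-- **Theorem 2.** Every bijection of the flag variety preserving relatedness of points in
both directions is induced by a semilinear bijection of `W = span 𝒢`, and any two such
semilinear bijections induce the same map on 1-dimensional subspaces of `W`; that is, the
bijection extends to a unique collineation of the subspace spanned by `𝒢`. -/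
theorem flagVariety_automorphism_extends_to_unique_collineation
    (hV : Module.finrank K V = 4)
    (η : flagVariety K V → flagVariety K V) (hbij : Function.Bijective η)
    (hη : ∀ x y : flagVariety K V,
      RelatedPts K V x.1 y.1 ↔ RelatedPts K V (η x).1 (η y).1) :
    (∃ (ζ : K ≃+* K)
        (f : spanFlagVariety K V →ₛₗ[(ζ : K →+* K)] spanFlagVariety K V),
        Function.Bijective f ∧
        ∀ (x : flagVariety K V) (v : spanFlagVariety K V),
          Submodule.span K {(v : FlagTensor K V)} = x.1 →
          Submodule.span K {(f v : FlagTensor K V)} = (η x).1) ∧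
    (∀ (ζ₁ ζ₂ : K ≃+* K)
        (f₁ : spanFlagVariety K V →ₛₗ[(ζ₁ : K →+* K)] spanFlagVariety K V)
        (f₂ : spanFlagVariety K V →ₛₗ[(ζ₂ : K →+* K)] spanFlagVariety K V),
        Function.Bijective f₁ → Function.Bijective f₂ →
        (∀ (x : flagVariety K V) (v : spanFlagVariety K V),
          Submodule.span K {(v : FlagTensor K V)} = x.1 →
          Submodule.span K {(f₁ v : FlagTensor K V)} = (η x).1) →
        (∀ (x : flagVariety K V) (v : spanFlagVariety K V),
          Submodule.span K {(v : FlagTensor K V)} = x.1 →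
          Submodule.span K {(f₂ v : FlagTensor K V)} = (η x).1) →
        ∀ v : spanFlagVariety K V,
          Submodule.span K {(f₁ v : FlagTensor K V)} =
          Submodule.span K {(f₂ v : FlagTensor K V)}) := by
  have := Fact.mk hV
  let e : ProjFlag K V ≃ ProjFlag K V :=
    (flagVarietyEquiv.trans (Equiv.ofBijective η hbij)).trans flagVarietyEquiv.symm
  have hte (Φ : ProjFlag K V) : flagVarietyEquiv (e Φ) = η (flagVarietyEquiv Φ) :=
    flagVarietyEquiv.apply_symm_apply _
  have he (F G : ProjFlag K V) : F.Adj G ↔ (e F).Adj (e G) := by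
    rw [← relatedPts_flagVarietyEquiv, ← relatedPts_flagVarietyEquiv, hte, hte]
    exact hη _ _
  have he' (F G : ProjFlag K V) : F.Adj G ↔ (e.symm F).Adj (e.symm G) := by
    rw [he (e.symm F), e.apply_symm_apply, e.apply_symm_apply]
  refine ⟨?_, fun ζ₁ ζ₂ f₁ f₂ _ hf₂ h₁ h₂ v => ?_⟩
  · obtain ⟨ζ, f, hf, hfe⟩ := (isInduced_of_adj_iff he).exists_bijective (isInduced_of_adj_iff he')
    refine ⟨ζ, f, hf, fun x v hv => ?_⟩
    obtain ⟨Φ, rfl⟩ := flagVarietyEquiv.surjective x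
    rw [← hte, span_eq_flagVarietyEquiv_iff]
    exact hfe Φ v (span_eq_flagVarietyEquiv_iff.1 hv)
  · obtain ⟨c, hc0, hc⟩ := exists_eq_smul_of_forall_isFlagVector
      (f₁ := (spanFlagVariety K V).subtype.comp f₁) (f₂ := (spanFlagVariety K V).subtype.comp f₂)
      ζ₂.surjective (Subtype.val_injective.comp hf₂.1) fun Φ v hv =>
        (h₁ _ v (span_eq_flagVarietyEquiv_iff.2 hv)).trans
          (h₂ _ v (span_eq_flagVarietyEquiv_iff.2 hv)).symm
    exact (congrArg (fun u => Submodule.span K {u}) (hc v)).trans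
      (Submodule.span_singleton_smul_eq (IsUnit.mk0 c hc0) _)
end
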